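/- arXiv:1507.04032 — 2 statements merged into one kernel-verified Lean document; each statement's English description precedes it below -/
import Mathlib

section
/- Let W be a matrix A_p weight, 1 < p < ∞, and for cubes I ⊆ Ĩ with comparable side lengths let V_I, V_Ĩ, V_I', V_Ĩ' be reducing operators as above. Then for all e ∈ ℂⁿ: |V_Ĩ e|^p ≲ ‖W‖_{A_p} |V_I e|^p, where the implied constant depends only on n, p and the side-length ratio. That is, the reducing operator of the larger cube is dominated by that of the smaller cube up to the A_p characteristic. -/
open MeasureTheory Matrix
open scoped ComplexOrder

/-- The operator norm on `n × n` complex matrices induced by the Euclidean norm. -/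
noncomputable def matNorm {n : ℕ} (M : Matrix (Fin n) (Fin n) ℂ) : ℝ :=
  ‖(Matrix.toEuclideanCLM (𝕜 := ℂ) M : EuclideanSpace ℂ (Fin n) →L[ℂ] EuclideanSpace ℂ (Fin n))‖

/-- The Euclidean norm of a vector in `ℂⁿ`. -/
noncomputable def vecNorm {n : ℕ} (v : Fin n → ℂ) : ℝ :=
  ‖(WithLp.equiv 2 (Fin n → ℂ)).symm v‖

/-- A (half-open, axis-parallel) cube in `ℝ^d`. -/
def IsCube {d : ℕ} (I : Set (Fin d → ℝ)) : Prop :=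
  ∃ (a : Fin d → ℝ) (ℓ : ℝ), 0 < ℓ ∧ I = Set.univ.pi fun i => Set.Ico (a i) (a i + ℓ)

/-- The average `(1/|I|) ∫_I g` of a scalar function over a set `I`. -/
noncomputable def avg {d : ℕ} (I : Set (Fin d → ℝ)) (g : (Fin d → ℝ) → ℝ) : ℝ :=
  (volume I).toReal⁻¹ * ∫ x in I, g x

/-- The (entrywise) average of a vector-valued function over a set `I`. -/
noncomputable def vavg {d n : ℕ} (I : Set (Fin d → ℝ)) (f : (Fin d → ℝ) → Fin n → ℂ) :
    Fin n → ℂ :=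
  fun i => (volume I).toReal⁻¹ • (∫ x in I, f x i)

/-- The (entrywise) average of a matrix-valued function over a set `I`. -/
noncomputable def mavg {d n : ℕ} (I : Set (Fin d → ℝ))
    (F : (Fin d → ℝ) → Matrix (Fin n) (Fin n) ℂ) : Matrix (Fin n) (Fin n) ℂ :=
  Matrix.of fun i j => (volume I).toReal⁻¹ • (∫ x in I, F x i j)

/-!
For all `x` and `t`, `|W^{1/p}(x) e| ≤ ‖W^{1/p}(x) W^{-1/p}(t)‖ |W^{1/p}(t) e|`. Average over
`t ∈ I` and apply Hölder's inequality on the right: one factor is `ρ_{W,I,p}(e)`, and in the other,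
the `L^{p'}` mean of the kernel, `I` may be enlarged to `Ĩ` at the cost of the size ratio. Averaging
the `p`-th power over `x ∈ Ĩ` then produces exactly the `A_p` average over `Ĩ`, without passing
through the dual reducing operators.

The last step needs the `A_p` integrand to be integrable, since a Bochner integral that diverges is
`0`. Only the scalar functions `|W^{1/p} e|` and `|W^{-1/p} e|` are known to be measurable, so the
kernel is written as a countable supremum of quotients `|W^{1/p}(x) u| / |W^{1/p}(t) u|`.
-/

open ProbabilityTheory TopologicalSpace
open scoped NNReal ENNReal

section Holder

variable {α : Type*} {mα : MeasurableSpace α} {ν κ : Measure α} {p q : ℝ}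

theorem memLp_of_integrable_rpow {f : α → ℝ} (hp : 0 < p) (hf : 0 ≤ f)
    (hfi : Integrable (fun x => f x ^ p) ν) : MemLp f (ENNReal.ofReal p) ν := by
  have hmeas : AEMeasurable f ν := by
    simpa only [Real.rpow_rpow_inv (hf _) hp.ne'] using hfi.aemeasurable.pow_const p⁻¹
  rw [← integrable_norm_rpow_iff hmeas.aestronglyMeasurable (by simpa using hp) (by simp)]
  simpa only [ENNReal.toReal_ofReal hp.le, Real.norm_of_nonneg (hf _)] using hfi

theorem le_integral_rpow_mul_integral_rpow [IsProbabilityMeasure ν] (hpq : p.HolderConjugate q)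
    {f g : α → ℝ} (hf : 0 ≤ f) (hg : 0 ≤ g) (hfi : Integrable (fun x => f x ^ p) ν)
    (hgi : Integrable (fun x => g x ^ q) ν) {a : ℝ} (ha : ∀ x, a ≤ f x * g x) :
    a ≤ (∫ x, f x ^ p ∂ν) ^ (1 / p) * (∫ x, g x ^ q ∂ν) ^ (1 / q) := by
  have hfp := memLp_of_integrable_rpow hpq.pos hf hfi
  have hgq := memLp_of_integrable_rpow hpq.symm.pos hg hgi
  have := hpq.ennrealOfReal
  calc
    a = ∫ _, a ∂ν := by simp
    _ ≤ ∫ x, f x * g x ∂ν := integral_mono (integrable_const a) (hfp.integrable_mul hgq) ha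
    _ ≤ _ := integral_mul_le_Lp_mul_Lq_of_nonneg hpq (.of_forall hf) (.of_forall hg) hfp hgq

theorem integral_le_mul_integral_of_le_smul {C : ℝ≥0} (hνκ : ν ≤ C • κ) {g : α → ℝ} (hg : 0 ≤ g)
    (hgi : Integrable g κ) : ∫ x, g x ∂ν ≤ C * ∫ x, g x ∂κ := by
  refine (integral_mono_measure hνκ (.of_forall hg) hgi.smul_measure_nnreal).trans_eq ?_
  rw [integral_smul_nnreal_measure, NNReal.smul_def, smul_eq_mul]

theorem rpow_le_mul_integral_rpow_of_le_mul [IsProbabilityMeasure ν] {C : ℝ≥0} (hνκ : ν ≤ C • κ)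
    (hpq : p.HolderConjugate q) {k f : α → ℝ} (hk : 0 ≤ k) (hf : 0 ≤ f)
    (hki : Integrable (fun t => k t ^ q) κ) (hfi : Integrable (fun t => f t ^ p) κ)
    {a : ℝ} (ha₀ : 0 ≤ a) (ha : ∀ t, a ≤ k t * f t) :
    a ^ p ≤ C ^ (p / q) * (∫ t, k t ^ q ∂κ) ^ (p / q) * ∫ t, f t ^ p ∂ν := by
  have hp := hpq.pos
  have hq := hpq.symm.pos
  have hkq : 0 ≤ fun t => k t ^ q := fun t => Real.rpow_nonneg (hk t) q
  have hfp₀ : 0 ≤ ∫ t, f t ^ p ∂ν := integral_nonneg fun t => Real.rpow_nonneg (hf t) p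
  have hkq₀ : 0 ≤ ∫ t, k t ^ q ∂ν := integral_nonneg hkq
  have hkκ₀ : 0 ≤ ∫ t, k t ^ q ∂κ := integral_nonneg hkq
  have hholder : a ≤ (∫ t, k t ^ q ∂ν) ^ (1 / q) * (∫ t, f t ^ p ∂ν) ^ (1 / p) :=
    le_integral_rpow_mul_integral_rpow hpq.symm hk hf
      (hki.of_measure_le_smul ENNReal.coe_ne_top hνκ)
      (hfi.of_measure_le_smul ENNReal.coe_ne_top hνκ) ha
  calc
    a ^ p ≤ ((∫ t, k t ^ q ∂ν) ^ (1 / q) * (∫ t, f t ^ p ∂ν) ^ (1 / p)) ^ p := by gcongr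
    _ = (∫ t, k t ^ q ∂ν) ^ (p / q) * ∫ t, f t ^ p ∂ν := by
      rw [Real.mul_rpow (by positivity) (by positivity), ← Real.rpow_mul hkq₀,
        ← Real.rpow_mul hfp₀, one_div_mul_cancel hp.ne', Real.rpow_one, one_div_mul_eq_div]
    _ ≤ (C * ∫ t, k t ^ q ∂κ) ^ (p / q) * ∫ t, f t ^ p ∂ν := by
      gcongr
      exact integral_le_mul_integral_of_le_smul hνκ hkq hki
    _ = C ^ (p / q) * (∫ t, k t ^ q ∂κ) ^ (p / q) * ∫ t, f t ^ p ∂ν := by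
      rw [Real.mul_rpow C.coe_nonneg hkκ₀]

end Holder

theorem cond_le_smul_cond {α : Type*} {mα : MeasurableSpace α} {μ : Measure α} {s t : Set α}
    {C : ℝ≥0} (hst : s ⊆ t) (hs₀ : μ s ≠ 0) (hs : μ s ≠ ∞) (hC : μ t ≤ C * μ s) :
    μ[|s] ≤ C • μ[|t] := by
  have ht₀ : μ t ≠ 0 := fun h => hs₀ (measure_mono_null hst h)
  have ht : μ t ≠ ∞ := ne_top_of_le_ne_top (ENNReal.mul_ne_top ENNReal.coe_ne_top hs) hC
  have hinv : (μ s)⁻¹ ≤ C * (μ t)⁻¹ := by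
    rw [← div_eq_mul_inv, ENNReal.le_div_iff_mul_le (.inl ht₀) (.inl ht), mul_comm,
      ← div_eq_mul_inv, ENNReal.div_le_iff hs₀ hs]
    exact hC
  calc
    μ[|s] = (μ s)⁻¹ • μ.restrict s := rfl
    _ ≤ (C * (μ t)⁻¹) • μ.restrict t := by gcongr
    _ = C • μ[|t] := mul_smul _ _ _

section OperatorNorm

variable {𝕜 E F G : Type*} [NontriviallyNormedField 𝕜]
  [NormedAddCommGroup E] [NormedSpace 𝕜 E] [NormedAddCommGroup F] [NormedSpace 𝕜 F]
  [NormedAddCommGroup G] [NormedSpace 𝕜 G]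

theorem norm_apply_le_opNorm_comp_symm_mul (A : E →L[𝕜] F) (B : E ≃L[𝕜] G) (e : E) :
    ‖A e‖ ≤ ‖A ∘L (B.symm : G →L[𝕜] E)‖ * ‖B e‖ := by
  simpa using (A ∘L (B.symm : G →L[𝕜] E)).le_opNorm (B e)

theorem norm_apply_div_le_opNorm_comp_symm (A : E →L[𝕜] F) (B : E ≃L[𝕜] G) (e : E) :
    ‖A e‖ / ‖B e‖ ≤ ‖A ∘L (B.symm : G →L[𝕜] E)‖ :=
  div_le_of_le_mul₀ (norm_nonneg _) (norm_nonneg _) (norm_apply_le_opNorm_comp_symm_mul A B e)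

theorem opNorm_comp_symm_eq_iSup {ι : Type*} {u : ι → E} (hu : DenseRange u) (A : E →L[𝕜] F)
    (B : E ≃L[𝕜] G) : ‖A ∘L (B.symm : G →L[𝕜] E)‖ = ⨆ i, ‖A (u i)‖ / ‖B (u i)‖ := by
  apply le_antisymm
  · set s := ⨆ i, ‖A (u i)‖ / ‖B (u i)‖
    have hs : ∀ e, ‖A e‖ ≤ s * ‖B e‖ := fun e => by
      refine hu.induction_on (p := fun e => ‖A e‖ ≤ s * ‖B e‖) e
        (isClosed_le (by fun_prop) (by fun_prop)) fun i => ?_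
      rcases eq_or_ne (u i) 0 with hi | hi
      · simp [hi]
      · rw [← div_le_iff₀ (norm_pos_iff.2 (B.map_eq_zero_iff.not.2 hi))]
        refine le_ciSup (f := fun i => ‖A (u i)‖ / ‖B (u i)‖) ⟨‖A ∘L (B.symm : G →L[𝕜] E)‖, ?_⟩ i
        exact Set.forall_mem_range.2 fun j => norm_apply_div_le_opNorm_comp_symm A B (u j)
    exact ContinuousLinearMap.opNorm_le_bound _ (Real.iSup_nonneg fun i => by positivity)
      fun v => by simpa using hs (B.symm v)
  · exact Real.iSup_le (fun i => norm_apply_div_le_opNorm_comp_symm A B (u i)) (norm_nonneg _)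

variable {β : Type*} {mβ : MeasurableSpace β} {μ : Measure β}

theorem aemeasurable_opNorm_comp_symm [SeparableSpace E] {A : β → E →L[𝕜] F} {B : β → E ≃L[𝕜] G}
    (hA : ∀ e, AEMeasurable (fun x => ‖A x e‖) μ) (hB : ∀ e, AEMeasurable (fun x => ‖B x e‖) μ) :
    AEMeasurable (fun x => ‖A x ∘L ((B x).symm : G →L[𝕜] E)‖) μ := by
  simp only [opNorm_comp_symm_eq_iSup (denseRange_denseSeq E)]
  exact .iSup fun i => (hA _).div (hB _)

theorem exists_opNorm_rpow_le_mul_sum [CompleteSpace 𝕜] {ι : Type*} [Fintype ι]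
    (b : Module.Basis ι 𝕜 E) {q : ℝ} (hq : 0 < q) :
    ∃ c : ℝ, ∀ A : E →L[𝕜] F, ‖A‖ ^ q ≤ c * ∑ i, ‖A (b i)‖ ^ q := by
  obtain ⟨c, hc, hbound⟩ := b.exists_opNorm_le (F := F)
  refine ⟨c ^ q, fun A => ?_⟩
  have hsum : 0 ≤ ∑ i, ‖A (b i)‖ ^ q := by positivity
  have hb (i : ι) : ‖A (b i)‖ ≤ (∑ i, ‖A (b i)‖ ^ q) ^ q⁻¹ := by
    rw [Real.le_rpow_inv_iff_of_pos (norm_nonneg _) hsum hq]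
    exact Finset.single_le_sum (f := fun i => ‖A (b i)‖ ^ q) (fun _ _ => by positivity)
      (Finset.mem_univ i)
  calc
    ‖A‖ ^ q ≤ (c * (∑ i, ‖A (b i)‖ ^ q) ^ q⁻¹) ^ q := by
      gcongr
      exact hbound (by positivity) hb
    _ = c ^ q * ∑ i, ‖A (b i)‖ ^ q := by
      rw [Real.mul_rpow hc.le (by positivity), Real.rpow_inv_rpow hsum hq.ne']

variable [ProperSpace 𝕜] [FiniteDimensional 𝕜 E] {q : ℝ}

theorem integrable_opNorm_rpow {A : β → E →L[𝕜] F} (hq : 0 < q)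
    (hA : ∀ e, Integrable (fun x => ‖A x e‖ ^ q) μ) : Integrable (fun x => ‖A x‖ ^ q) μ := by
  have : ProperSpace E := FiniteDimensional.proper 𝕜 E
  have hmeas (e : E) : AEMeasurable (fun x => ‖A x e‖) μ :=
    (memLp_of_integrable_rpow hq (fun _ => norm_nonneg _) (hA e)).aemeasurable
  have hnorm : AEMeasurable (fun x => ‖A x‖) μ := by
    simpa using aemeasurable_opNorm_comp_symm (B := fun _ => .refl 𝕜 E) hmeas
      fun _ => aemeasurable_const
  let b := Module.finBasis 𝕜 E
  obtain ⟨c, hc⟩ := exists_opNorm_rpow_le_mul_sum (F := F) b hq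
  have hsum : Integrable (fun x => ∑ i, ‖A x (b i)‖ ^ q) μ :=
    integrable_finsetSum _ fun i _ => hA (b i)
  refine (hsum.const_mul c).mono'
    (hnorm.pow_const q).aestronglyMeasurable (.of_forall fun x => ?_)
  simpa only [Real.norm_of_nonneg (Real.rpow_nonneg (norm_nonneg _) q)] using hc (A x)

end OperatorNorm

section OperatorWeight

variable {𝕜 E F G : Type*} [NontriviallyNormedField 𝕜]
  [NormedAddCommGroup E] [NormedSpace 𝕜 E] [NormedAddCommGroup F] [NormedSpace 𝕜 F]
  [NormedAddCommGroup G] [NormedSpace 𝕜 G]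
  {α : Type*} {mα : MeasurableSpace α} {ν κ : Measure α} {p q : ℝ} {W : α → E ≃L[𝕜] F}

/-- The norm `ρ_{W,I,p}(e) = (⨍_I |W^{1/p} e|^p)^{1/p}`, of which the reducing operators are
approximations. Here and in the definitions below `W` stands for the paper's `W^{1/p}`, and the
average over `I` is the integral against a measure `μ`, such as normalized Lebesgue measure on
`I`. -/
noncomputable def weightNorm (μ : Measure α) (p : ℝ) (W : α → E ≃L[𝕜] F) (e : E) : ℝ :=
  (∫ x, ‖W x e‖ ^ p ∂μ) ^ (1 / p)

/-- The kernel `‖W^{1/p}(x) W^{-1/p}(t)‖` of the matrix `A_p` condition. -/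
noncomputable def weightKernel (W : α → E ≃L[𝕜] F) (x t : α) : ℝ :=
  ‖(W x : E →L[𝕜] F) ∘L ((W t).symm : F →L[𝕜] E)‖

/-- The `A_p` average `⨍_I (⨍_I ‖W^{1/p}(x) W^{-1/p}(t)‖^q dt)^{p/q} dx`, with `q` the conjugate
exponent; the characteristic `‖W‖_{A_p}` is its supremum over cubes `I`. -/
noncomputable def apAverage (μ : Measure α) (p q : ℝ) (W : α → E ≃L[𝕜] F) : ℝ :=
  ∫ x, (∫ t, weightKernel W x t ^ q ∂μ) ^ (p / q) ∂μ

theorem weightNorm_nonneg (μ : Measure α) (p : ℝ) (W : α → E ≃L[𝕜] F) (e : E) :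
    0 ≤ weightNorm μ p W e := by
  unfold weightNorm
  positivity

theorem weightNorm_rpow (hp : p ≠ 0) (μ : Measure α) (W : α → E ≃L[𝕜] F) (e : E) :
    weightNorm μ p W e ^ p = ∫ x, ‖W x e‖ ^ p ∂μ := by
  rw [weightNorm, one_div, Real.rpow_inv_rpow (by positivity) hp]

theorem weightKernel_nonneg (W : α → E ≃L[𝕜] F) (x t : α) : 0 ≤ weightKernel W x t :=
  norm_nonneg _

theorem integral_weightKernel_rpow_nonneg (μ : Measure α) (q : ℝ) (W : α → E ≃L[𝕜] F) (x : α) :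
    0 ≤ ∫ t, weightKernel W x t ^ q ∂μ :=
  integral_nonneg fun t => Real.rpow_nonneg (weightKernel_nonneg W x t) q

theorem apAverage_nonneg (μ : Measure α) (p q : ℝ) (W : α → E ≃L[𝕜] F) : 0 ≤ apAverage μ p q W :=
  integral_nonneg fun x => Real.rpow_nonneg (integral_weightKernel_rpow_nonneg μ q W x) _

theorem weightKernel_rpow_le (hq : 0 ≤ q) (W : α → E ≃L[𝕜] F) (x t : α) :
    weightKernel W x t ^ q ≤ ‖(W x : E →L[𝕜] F)‖ ^ q * ‖((W t).symm : F →L[𝕜] E)‖ ^ q := by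
  rw [← Real.mul_rpow (norm_nonneg _) (norm_nonneg _)]
  exact Real.rpow_le_rpow (norm_nonneg _) (ContinuousLinearMap.opNorm_comp_le _ _) hq

theorem aemeasurable_weightKernel_right [SeparableSpace E]
    (hW : ∀ e, AEMeasurable (fun x => ‖W x e‖) κ) (x : α) :
    AEMeasurable (weightKernel W x) κ :=
  aemeasurable_opNorm_comp_symm (A := fun _ => (W x : E →L[𝕜] F)) (B := W)
    (fun _ => aemeasurable_const) hW

theorem aemeasurable_weightKernel [SeparableSpace E]
    (hW : ∀ e, AEMeasurable (fun x => ‖W x e‖) κ) :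
    AEMeasurable (fun z : α × α => weightKernel W z.1 z.2) (κ.prod κ) :=
  aemeasurable_opNorm_comp_symm (A := fun z : α × α => (W z.1 : E →L[𝕜] F))
    (B := fun z => W z.2) (fun e => (hW e).comp_fst) (fun e => (hW e).comp_snd)

theorem integrable_weightKernel_rpow [SeparableSpace E] (hq : 0 ≤ q)
    (hW : ∀ e, AEMeasurable (fun x => ‖W x e‖) κ)
    (hW' : Integrable (fun t => ‖((W t).symm : F →L[𝕜] E)‖ ^ q) κ) (x : α) :
    Integrable (fun t => weightKernel W x t ^ q) κ := by
  refine (hW'.const_mul (‖(W x : E →L[𝕜] F)‖ ^ q)).mono'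
    ((aemeasurable_weightKernel_right hW x).pow_const q).aestronglyMeasurable
    (.of_forall fun t => ?_)
  rw [Real.norm_of_nonneg (Real.rpow_nonneg (weightKernel_nonneg W x t) q)]
  exact weightKernel_rpow_le hq W x t

theorem integral_weightKernel_rpow_le [SeparableSpace E] (hp : 0 ≤ p) (hq : 0 < q)
    (hW : ∀ e, AEMeasurable (fun x => ‖W x e‖) κ)
    (hW' : Integrable (fun t => ‖((W t).symm : F →L[𝕜] E)‖ ^ q) κ) (x : α) :
    (∫ t, weightKernel W x t ^ q ∂κ) ^ (p / q) ≤
      ‖(W x : E →L[𝕜] F)‖ ^ p * (∫ t, ‖((W t).symm : F →L[𝕜] E)‖ ^ q ∂κ) ^ (p / q) := by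
  calc
    (∫ t, weightKernel W x t ^ q ∂κ) ^ (p / q) ≤
        (∫ t, ‖(W x : E →L[𝕜] F)‖ ^ q * ‖((W t).symm : F →L[𝕜] E)‖ ^ q ∂κ) ^ (p / q) := by
      refine Real.rpow_le_rpow (integral_weightKernel_rpow_nonneg κ q W x) ?_ (by positivity)
      exact integral_mono (integrable_weightKernel_rpow hq.le hW hW' x) (hW'.const_mul _)
        (weightKernel_rpow_le hq.le W x)
    _ = _ := by
      rw [integral_const_mul, Real.mul_rpow (by positivity) (by positivity),
        ← Real.rpow_mul (norm_nonneg _), mul_div_cancel₀ _ hq.ne']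

theorem integrable_integral_weightKernel_rpow [SeparableSpace E] [SFinite κ] (hp : 0 ≤ p)
    (hq : 0 < q) (hW : ∀ e, AEMeasurable (fun x => ‖W x e‖) κ)
    (hWp : Integrable (fun x => ‖(W x : E →L[𝕜] F)‖ ^ p) κ)
    (hW' : Integrable (fun t => ‖((W t).symm : F →L[𝕜] E)‖ ^ q) κ) :
    Integrable (fun x => (∫ t, weightKernel W x t ^ q ∂κ) ^ (p / q)) κ := by
  have hmeas : AEMeasurable (fun x => ∫ t, weightKernel W x t ^ q ∂κ) κ :=
    ((aemeasurable_weightKernel hW).pow_const q).aestronglyMeasurable.integral_prod_right'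
      |>.aemeasurable
  refine (hWp.mul_const ((∫ t, ‖((W t).symm : F →L[𝕜] E)‖ ^ q ∂κ) ^ (p / q))).mono'
    (hmeas.pow_const _).aestronglyMeasurable (.of_forall fun x => ?_)
  rw [Real.norm_of_nonneg (Real.rpow_nonneg (integral_weightKernel_rpow_nonneg κ q W x) _)]
  exact integral_weightKernel_rpow_le hp hq hW hW' x

theorem weightNorm_rpow_le [ProperSpace 𝕜] [FiniteDimensional 𝕜 E] [IsProbabilityMeasure ν]
    [SFinite κ] {C : ℝ≥0} (hνκ : ν ≤ C • κ) (hpq : p.HolderConjugate q)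
    (hW : ∀ e, Integrable (fun x => ‖W x e‖ ^ p) κ)
    (hW' : ∀ v, Integrable (fun x => ‖(W x).symm v‖ ^ q) κ) (e : E) :
    weightNorm κ p W e ^ p ≤ C ^ (p / q) * apAverage κ p q W * weightNorm ν p W e ^ p := by
  have hp := hpq.pos
  have hq := hpq.symm.pos
  have : ProperSpace E := FiniteDimensional.proper 𝕜 E
  obtain ⟨x₀⟩ := nonempty_of_isProbabilityMeasure ν
  have : FiniteDimensional 𝕜 F := (W x₀).toLinearEquiv.finiteDimensional
  have hmeas (e : E) : AEMeasurable (fun x => ‖W x e‖) κ :=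
    (memLp_of_integrable_rpow hp (fun _ => norm_nonneg _) (hW e)).aemeasurable
  have hnorm : Integrable (fun x => ‖(W x : E →L[𝕜] F)‖ ^ p) κ := integrable_opNorm_rpow hp hW
  have hnorm' : Integrable (fun x => ‖((W x).symm : F →L[𝕜] E)‖ ^ q) κ :=
    integrable_opNorm_rpow hq hW'
  have hpointwise (x : α) : ‖W x e‖ ^ p ≤
      C ^ (p / q) * (∫ t, weightKernel W x t ^ q ∂κ) ^ (p / q) * ∫ t, ‖W t e‖ ^ p ∂ν :=
    rpow_le_mul_integral_rpow_of_le_mul hνκ hpq (weightKernel_nonneg W x) (fun _ => norm_nonneg _)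
      (integrable_weightKernel_rpow hq.le hmeas hnorm' x) (hW e) (norm_nonneg _)
      fun t => norm_apply_le_opNorm_comp_symm_mul (W x : E →L[𝕜] F) (W t) e
  have hkernel := integrable_integral_weightKernel_rpow hp.le hq hmeas hnorm hnorm'
  rw [weightNorm_rpow hp.ne', weightNorm_rpow hp.ne']
  calc
    ∫ x, ‖W x e‖ ^ p ∂κ ≤ ∫ x, C ^ (p / q) * (∫ t, weightKernel W x t ^ q ∂κ) ^ (p / q) *
        ∫ t, ‖W t e‖ ^ p ∂ν ∂κ :=
      integral_mono (hW e) ((hkernel.const_mul _).mul_const _) hpointwise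
    _ = C ^ (p / q) * apAverage κ p q W * ∫ t, ‖W t e‖ ^ p ∂ν := by
      rw [integral_mul_const, integral_const_mul, apAverage]

/-- The measures `ν` and `κ` generalize normalized Lebesgue measure on `I` and `Ĩ`. -/
theorem stmt7_general [ProperSpace 𝕜] [FiniteDimensional 𝕜 E] [IsProbabilityMeasure ν]
    [SFinite κ] {C : ℝ≥0} (hνκ : ν ≤ C • κ) (hpq : p.HolderConjugate q)
    (hW : ∀ e, Integrable (fun x => ‖W x e‖ ^ p) κ)
    (hW' : ∀ v, Integrable (fun x => ‖(W x).symm v‖ ^ q) κ) {Cw : ℝ}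
    (hAp : apAverage κ p q W ≤ Cw) {Vν Vκ : E →L[𝕜] G} {K : ℝ} (hK : 0 ≤ K)
    (hVν : ∀ e, weightNorm ν p W e ≤ ‖Vν e‖) (hVκ : ∀ e, ‖Vκ e‖ ≤ K * weightNorm κ p W e)
    (e : E) : ‖Vκ e‖ ^ p ≤ K ^ p * C ^ (p / q) * Cw * ‖Vν e‖ ^ p := by
  have hp := hpq.pos
  have hκ₀ := weightNorm_nonneg κ p W e
  have hν₀ := weightNorm_nonneg ν p W e
  have hCw : 0 ≤ Cw := (apAverage_nonneg κ p q W).trans hAp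
  calc
    ‖Vκ e‖ ^ p ≤ (K * weightNorm κ p W e) ^ p := by gcongr; exact hVκ e
    _ = K ^ p * weightNorm κ p W e ^ p := Real.mul_rpow hK hκ₀
    _ ≤ K ^ p * (C ^ (p / q) * apAverage κ p q W * weightNorm ν p W e ^ p) := by
      gcongr
      exact weightNorm_rpow_le hνκ hpq hW hW' e
    _ ≤ K ^ p * (C ^ (p / q) * Cw * ‖Vν e‖ ^ p) := by
      gcongr
      exact hVν e
    _ = K ^ p * C ^ (p / q) * Cw * ‖Vν e‖ ^ p := by ring

end OperatorWeight

theorem avg_eq_integral_cond {d : ℕ} (I : Set (Fin d → ℝ)) (g : (Fin d → ℝ) → ℝ) :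
    avg I g = ∫ x, g x ∂volume[|I] := by
  rw [avg, ProbabilityTheory.cond, integral_smul_measure, ENNReal.toReal_inv, smul_eq_mul]

namespace IsCube

variable {d : ℕ} {I : Set (Fin d → ℝ)}

theorem volume_ne_zero (hI : IsCube I) : volume I ≠ 0 := by
  obtain ⟨a, l, hl, rfl⟩ := hI
  simp [Real.volume_pi_Ico, hl.not_ge]

theorem volume_ne_top (hI : IsCube I) : volume I ≠ ∞ := by
  obtain ⟨a, l, -, rfl⟩ := hI
  simp [Real.volume_pi_Ico]

theorem integrable_cond (hI : IsCube I) {g : (Fin d → ℝ) → ℝ} (hg : IntegrableOn g I) :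
    Integrable g volume[|I] :=
  hg.integrable.smul_measure (ENNReal.inv_ne_top.2 hI.volume_ne_zero)

end IsCube

/-- The automorphism of `ℂⁿ` given by an invertible matrix, through which a matrix weight becomes an
operator weight. Invertible matrices are encoded as units. -/
noncomputable def unitEuclideanCLE {n : ℕ} :
    (Matrix (Fin n) (Fin n) ℂ)ˣ ≃* (EuclideanSpace ℂ (Fin n) ≃L[ℂ] EuclideanSpace ℂ (Fin n)) :=
  (Units.mapEquiv (Matrix.toEuclideanCLM (𝕜 := ℂ) (n := Fin n)).toMulEquiv).trans
    (ContinuousLinearEquiv.unitsEquiv ℂ _)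

theorem weightKernel_unitEuclideanCLE {α : Type*} {n : ℕ}
    (M : α → (Matrix (Fin n) (Fin n) ℂ)ˣ) (x t : α) :
    weightKernel (fun x => unitEuclideanCLE (M x)) x t =
      matNorm ((M x : Matrix (Fin n) (Fin n) ℂ) * (M t : Matrix (Fin n) (Fin n) ℂ)⁻¹) := by
  rw [← Matrix.coe_units_inv, matNorm, map_mul]
  rfl

/-- If `W` is a matrix `A_p` weight (characteristic at most `Cw`) and `I ⊆ Ĩ` are cubes with
`|Ĩ| ≤ C |I|`, then `|V_Ĩ e|^p ≲ Cw |V_I e|^p` for all `e`, with implied constant depending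
only on `n`, `p` and the size ratio `C`.  Here `Wp = W^{1/p}`, `Wm = Wp⁻¹ = W^{-1/p}`, and
`VI, VI', VItil, VItil'` are reducing operators for `ρ_{W,I,p}`, `ρ*_{W,I,p}`,
`ρ_{W,Ĩ,p}`, `ρ*_{W,Ĩ,p}` respectively. -/
theorem stmt7 {d n : ℕ} (p p' C : ℝ) (hp : 1 < p) (hpp' : 1 / p + 1 / p' = 1) (hC : 0 < C) :
    ∃ c : ℝ, 0 < c ∧
      ∀ (Wp Wm : (Fin d → ℝ) → Matrix (Fin n) (Fin n) ℂ),
        (∀ x, (Wp x).PosDef) → (∀ x, Wm x = (Wp x)⁻¹) →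
      ∀ Cw : ℝ, 1 ≤ Cw →
      (∀ J : Set (Fin d → ℝ), IsCube J →
        avg J (fun x => (avg J fun t => matNorm (Wp x * Wm t) ^ p') ^ (p / p')) ≤ Cw) →
      ∀ (I Itil : Set (Fin d → ℝ)), IsCube I → IsCube Itil → I ⊆ Itil →
        volume Itil ≤ ENNReal.ofReal C * volume I →
      (∀ J : Set (Fin d → ℝ), IsCube J →
        ∀ e : Fin n → ℂ, IntegrableOn (fun x => vecNorm ((Wp x).mulVec e) ^ p) J volume) →
      (∀ J : Set (Fin d → ℝ), IsCube J →
        ∀ e : Fin n → ℂ, IntegrableOn (fun x => vecNorm ((Wm x).mulVec e) ^ p') J volume) →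
      ∀ (VI VI' VItil VItil' : Matrix (Fin n) (Fin n) ℂ),
        VI.PosDef → VI'.PosDef → VItil.PosDef → VItil'.PosDef →
      (∀ e : Fin n → ℂ,
        (avg I fun x => vecNorm ((Wp x).mulVec e) ^ p) ^ (1 / p) ≤ vecNorm (VI.mulVec e) ∧
        vecNorm (VI.mulVec e)
          ≤ Real.sqrt n * (avg I fun x => vecNorm ((Wp x).mulVec e) ^ p) ^ (1 / p)) →
      (∀ e : Fin n → ℂ,
        (avg I fun x => vecNorm ((Wm x).mulVec e) ^ p') ^ (1 / p') ≤ vecNorm (VI'.mulVec e) ∧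
        vecNorm (VI'.mulVec e)
          ≤ Real.sqrt n * (avg I fun x => vecNorm ((Wm x).mulVec e) ^ p') ^ (1 / p')) →
      (∀ e : Fin n → ℂ,
        (avg Itil fun x => vecNorm ((Wp x).mulVec e) ^ p) ^ (1 / p)
          ≤ vecNorm (VItil.mulVec e) ∧
        vecNorm (VItil.mulVec e)
          ≤ Real.sqrt n * (avg Itil fun x => vecNorm ((Wp x).mulVec e) ^ p) ^ (1 / p)) →
      (∀ e : Fin n → ℂ,
        (avg Itil fun x => vecNorm ((Wm x).mulVec e) ^ p') ^ (1 / p')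
          ≤ vecNorm (VItil'.mulVec e) ∧
        vecNorm (VItil'.mulVec e)
          ≤ Real.sqrt n * (avg Itil fun x => vecNorm ((Wm x).mulVec e) ^ p') ^ (1 / p')) →
      ∀ e : Fin n → ℂ,
        vecNorm (VItil.mulVec e) ^ p ≤ c * Cw * vecNorm (VI.mulVec e) ^ p := by
  lift C to ℝ≥0 using hC.le
  have hpq : p.HolderConjugate p' := Real.holderConjugate_iff.2 ⟨hp, by simpa using hpp'⟩
  refine ⟨√n ^ p * C ^ (p / p') + 1, by positivity, ?_⟩
  intro Wp Wm hWp hWm Cw hCw hAp I J hI hJ hIJ hvol hintp hintm VI _ VJ _ _ _ _ _ hVI _ hVJ _ e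
  obtain rfl : Wm = fun x => (Wp x)⁻¹ := funext hWm
  lift Wp to (Fin d → ℝ) → (Matrix (Fin n) (Fin n) ℂ)ˣ using fun x => (hWp x).isUnit
  have := cond_isProbabilityMeasure_of_finite hI.volume_ne_zero hI.volume_ne_top
  rw [ENNReal.ofReal_coe_nnreal] at hvol
  simp only [avg_eq_integral_cond, ← weightKernel_unitEuclideanCLE] at hAp hVI hVJ
  simp only [← Matrix.coe_units_inv] at hintm
  have hbound : vecNorm (VJ *ᵥ e) ^ p ≤ √n ^ p * C ^ (p / p') * Cw * vecNorm (VI *ᵥ e) ^ p :=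
    stmt7_general (W := fun x => unitEuclideanCLE (Wp x))
      (Vν := toEuclideanCLM (𝕜 := ℂ) VI) (Vκ := toEuclideanCLM (𝕜 := ℂ) VJ)
      (cond_le_smul_cond hIJ hI.volume_ne_zero hI.volume_ne_top hvol) hpq
      (fun v => hJ.integrable_cond (hintp J hJ v.ofLp))
      (fun v => hJ.integrable_cond (hintm J hJ v.ofLp)) (hAp J hJ) (Real.sqrt_nonneg n)
      (fun v => (hVI v.ofLp).1) (fun v => (hVJ v.ofLp).2) (WithLp.toLp 2 e)
  have hVIe : 0 ≤ vecNorm (VI *ᵥ e) := norm_nonneg _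
  exact hbound.trans (by gcongr; exact le_add_of_nonneg_right zero_le_one)
end

section
/- (Decaying stopping time) Let 1 < p < ∞ and W a matrix A_p weight on ℝ^d with reducing operators V_I. For a dyadic cube I and parameters λ₁, λ₂ > 1, let J(I) be the maximal dyadic subcubes J of I with ‖V_J V_I^{-1}‖^p > λ₁ or ‖V_J^{-1} V_I‖^{p'} > λ₂, and define J^j(I) iteratively. Then there exist λ₁ ≈ 1 (depending only on n, d) and λ₂ ≈ ‖W‖_{A_p}^{p'/p} such that |⋃ J^j(I)| ≤ 2^{-j}|I| for every dyadic cube I and every j ≥ 0. -/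
open MeasureTheory Matrix
open scoped ComplexOrder

/-- The dyadic cube of generation `k` indexed by `m ∈ ℤ^d`. -/
def dCube (d : ℕ) (I : ℤ × (Fin d → ℤ)) : Set (Fin d → ℝ) :=
  Set.univ.pi fun i =>
    Set.Ico ((I.2 i : ℝ) * (2 : ℝ) ^ (-I.1)) (((I.2 i : ℝ) + 1) * (2 : ℝ) ^ (-I.1))

/-- `J` is a "stopping" cube for `I`: `‖V_J V_I⁻¹‖^p > λ₁` or `‖V_J⁻¹ V_I‖^{p'} > λ₂`. -/
def Bad {d n : ℕ} (p p' lam1 lam2 : ℝ)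
    (V : ℤ × (Fin d → ℤ) → Matrix (Fin n) (Fin n) ℂ) (I J : ℤ × (Fin d → ℤ)) : Prop :=
  lam1 < matNorm (V J * (V I)⁻¹) ^ p ∨ lam2 < matNorm ((V J)⁻¹ * V I) ^ p'

/-- `J` is a maximal stopping subcube of `I`. -/
def MaxBad {d n : ℕ} (p p' lam1 lam2 : ℝ)
    (V : ℤ × (Fin d → ℤ) → Matrix (Fin n) (Fin n) ℂ) (I J : ℤ × (Fin d → ℤ)) : Prop :=
  dCube d J ⊆ dCube d I ∧ Bad p p' lam1 lam2 V I J ∧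
    ∀ K : ℤ × (Fin d → ℤ), dCube d J ⊆ dCube d K → dCube d K ⊆ dCube d I →
      Bad p p' lam1 lam2 V I K → dCube d K = dCube d J

/-- The iterated stopping families `J^j(I)`: `J^0(I) = {I}` and
`J^{j+1}(I) = ⋃_{K ∈ J^j(I)} {maximal stopping subcubes of K}`. -/
def StopFam {d n : ℕ} (p p' lam1 lam2 : ℝ)
    (V : ℤ × (Fin d → ℤ) → Matrix (Fin n) (Fin n) ℂ) :
    ℕ → ℤ × (Fin d → ℤ) → Set (ℤ × (Fin d → ℤ))
  | 0, I => {I}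
  | (j + 1), I => ⋃ K ∈ StopFam p p' lam1 lam2 V j I, {J | MaxBad p p' lam1 lam2 V K J}

/-!
The cubes in `J(I)` are maximal, hence disjoint, and are split according to which of the two
inequalities they satisfy. On a cube `J` of the first kind the reducing property gives
`λ₁ < ‖V_J V_I⁻¹‖ ^ p ≲ ⨍_J ‖W^{1/p} V_I⁻¹‖ ^ p`; on a cube of the second kind duality gives
`λ₂ < ‖V_J⁻¹ V_I‖ ^ p' ≤ ⨍_J ‖W^{-1/p} V_I‖ ^ p'`. Summing over disjoint cubes bounds their
measure by the average over `I` of the same function, divided by `λ₁` or `λ₂`, times `|I|`. The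
first average over `I` is bounded by a dimensional constant, the second by a multiple of
`[W]_{A_p} ^ (p' / p)`: a vector realizing the `L^p'` norm of `W^{-1/p} V_I e` by duality turns it
into the `A_p` average. Hence suitable `λ₁` and `λ₂` leave at most a quarter of `|I|` to each kind,
and the bound `|I| / 2` for one generation iterates.
-/

section OperatorFields

variable {𝕜 E F ι X : Type*} [RCLike 𝕜] [NormedAddCommGroup E] [InnerProductSpace 𝕜 E]
  [NormedAddCommGroup F] [NormedSpace 𝕜 F] [Fintype ι] [MeasurableSpace X] {μ : Measure X}

theorem opNorm_le_sum_norm_apply_orthonormalBasis (b : OrthonormalBasis ι 𝕜 E) (T : E →L[𝕜] F) :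
    ‖T‖ ≤ ∑ i, ‖T (b i)‖ := by
  refine T.opNorm_le_bound (by positivity) fun x => ?_
  calc ‖T x‖ = ‖∑ i, inner 𝕜 (b i) x • T (b i)‖ := by
        conv_lhs => rw [← b.sum_repr' x]
        simp only [map_sum, map_smul]
    _ ≤ ∑ i, ‖inner 𝕜 (b i) x • T (b i)‖ := norm_sum_le _ _
    _ ≤ ∑ i, ‖T (b i)‖ * ‖x‖ := Finset.sum_le_sum fun i _ => by
        rw [norm_smul, mul_comm]
        gcongr
        simpa only [b.norm_eq_one, one_mul] using norm_inner_le_norm (𝕜 := 𝕜) (b i) x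
    _ = (∑ i, ‖T (b i)‖) * ‖x‖ := (Finset.sum_mul ..).symm

theorem opNorm_rpow_le_sum_norm_apply_orthonormalBasis_rpow (b : OrthonormalBasis ι 𝕜 E)
    (T : E →L[𝕜] F) {p : ℝ} (hp : 1 ≤ p) :
    ‖T‖ ^ p ≤ (Fintype.card ι : ℝ) ^ (p - 1) * ∑ i, ‖T (b i)‖ ^ p :=
  calc ‖T‖ ^ p ≤ (∑ i, ‖T (b i)‖) ^ p := by
        gcongr
        exact opNorm_le_sum_norm_apply_orthonormalBasis b T
    _ ≤ _ := Real.rpow_sum_le_const_mul_sum_rpow_of_nonneg _ hp fun _ _ => norm_nonneg _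

theorem aestronglyMeasurable_of_norm_rpow {G : Type*} [NormedAddCommGroup G] {f : X → G} {p : ℝ}
    (hp : p ≠ 0) (hf : AEStronglyMeasurable (fun x => ‖f x‖ ^ p) μ) :
    AEStronglyMeasurable (fun x => ‖f x‖) μ :=
  (hf.aemeasurable.pow_const p⁻¹).aestronglyMeasurable.congr
    (.of_forall fun _ => Real.rpow_rpow_inv (norm_nonneg _) hp)

theorem integrable_norm_rpow_iff_memLp_ofReal {G : Type*} [NormedAddCommGroup G] {f : X → G}
    {p : ℝ} (hp : 0 < p) (hf : AEStronglyMeasurable f μ) :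
    Integrable (fun x => ‖f x‖ ^ p) μ ↔ MemLp f (ENNReal.ofReal p) μ := by
  simpa only [ENNReal.toReal_ofReal hp.le] using
    integrable_norm_rpow_iff hf (ENNReal.ofReal_pos.2 hp).ne' ENNReal.ofReal_ne_top

theorem aestronglyMeasurable_inner_of_forall_norm {A : X → F →ₗ[𝕜] E}
    (hA : ∀ e, AEStronglyMeasurable (fun x => ‖A x e‖) μ) (e f : F) :
    AEStronglyMeasurable (fun x => inner 𝕜 (A x e) (A x f)) μ := by
  have sq (g : F) : AEStronglyMeasurable (fun x => (‖A x g‖ : 𝕜) ^ 2) μ :=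
    (RCLike.continuous_ofReal.comp_aestronglyMeasurable (hA g)).pow 2
  simp only [inner_eq_sum_norm_sq_div_four (𝕜 := 𝕜), div_eq_mul_inv, ← map_smul, ← map_add,
    ← map_sub]
  exact (((sq _).sub (sq _)).add (((sq _).sub (sq _)).mul_const _)).mul_const _

variable [FiniteDimensional 𝕜 E]

theorem aestronglyMeasurable_of_forall_inner {f : X → E}
    (hf : ∀ e, AEStronglyMeasurable (fun x => inner 𝕜 e (f x)) μ) : AEStronglyMeasurable f μ := by
  let b := stdOrthonormalBasis 𝕜 E
  have expand : f = fun x => ∑ i, inner 𝕜 (b i) (f x) • b i :=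
    funext fun x => (b.sum_repr' (f x)).symm
  rw [expand]
  exact Finset.aestronglyMeasurable_fun_sum _ fun i _ => (hf (b i)).smul_const (b i)

theorem aestronglyMeasurable_of_forall_apply {A : X → E →L[𝕜] F}
    (hA : ∀ e, AEStronglyMeasurable (fun x => A x e) μ) : AEStronglyMeasurable A μ := by
  let b := stdOrthonormalBasis 𝕜 E
  have expand : A = fun x => ∑ i, (innerSL 𝕜 (b i)).smulRight (A x (b i)) := by
    ext x e
    conv_lhs => rw [← b.sum_repr' e]
    simp only [map_sum, map_smul, _root_.sum_apply,
      ContinuousLinearMap.smulRight_apply, innerSL_apply_apply]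
  rw [expand]
  exact Finset.aestronglyMeasurable_fun_sum _ fun i _ =>
    (ContinuousLinearMap.smulRightL 𝕜 E F (innerSL 𝕜 (b i))).continuous.comp_aestronglyMeasurable
      (hA (b i))

end OperatorFields

section PositiveOperatorFields

variable {E X : Type*} [NormedAddCommGroup E] [InnerProductSpace ℂ E] [FiniteDimensional ℂ E]
  [MeasurableSpace X] {μ : Measure X} {A : X → E →L[ℂ] E}

-- Norms determine `A x * A x` by polarization, and `A x` is its positive square root.
theorem aestronglyMeasurable_of_isPositive_of_forall_norm (hA : ∀ x, (A x).IsPositive)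
    (hm : ∀ e, AEStronglyMeasurable (fun x => ‖A x e‖) μ) : AEStronglyMeasurable A μ := by
  have := FiniteDimensional.complete ℂ E
  have square_measurable : AEStronglyMeasurable (fun x => A x * A x) μ := by
    refine aestronglyMeasurable_of_forall_apply (𝕜 := ℂ) fun f =>
      aestronglyMeasurable_of_forall_inner (𝕜 := ℂ) fun e => ?_
    simpa only [mul_apply_eq_comp, (hA _).inner_left_eq_inner_right,
      ContinuousLinearMap.coe_coe] using
      aestronglyMeasurable_inner_of_forall_norm (𝕜 := ℂ) (A := fun x => (A x : E →ₗ[ℂ] E)) hm e f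
  have nonneg x : 0 ≤ A x := (A x).nonneg_iff_isPositive.2 (hA x)
  have square_nonneg x : 0 ≤ A x * A x := (hA x).isSelfAdjoint.mul_self_nonneg
  have sqrt_continuous : Continuous fun T : {T : E →L[ℂ] E | 0 ≤ T} => CFC.sqrt T.1 :=
    continuousOn_iff_continuous_domRestrict.1 CFC.continuousOn_sqrt
  have square_measurable' : AEStronglyMeasurable
      (fun x => (⟨A x * A x, square_nonneg x⟩ : {T : E →L[ℂ] E | 0 ≤ T})) μ :=
    Topology.IsEmbedding.subtypeVal.aestronglyMeasurable_comp_iff.1 square_measurable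
  exact (sqrt_continuous.comp_aestronglyMeasurable square_measurable').congr
    (.of_forall fun x => CFC.sqrt_mul_self (A x) (nonneg x))

theorem memLp_of_isPositive_of_forall_integrable {p : ℝ} (hp : 1 ≤ p) (hA : ∀ x, (A x).IsPositive)
    (hi : ∀ e, Integrable (fun x => ‖A x e‖ ^ p) μ) : MemLp A (ENNReal.ofReal p) μ := by
  have hp0 : 0 < p := one_pos.trans_le hp
  have measurable : AEStronglyMeasurable A μ :=
    aestronglyMeasurable_of_isPositive_of_forall_norm hA fun e =>
      aestronglyMeasurable_of_norm_rpow hp0.ne' (hi e).aestronglyMeasurable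
  rw [← integrable_norm_rpow_iff_memLp_ofReal hp0 measurable]
  let b := stdOrthonormalBasis ℂ E
  have dominating := (integrable_finsetSum Finset.univ fun i _ => hi (b i)).const_mul
    ((Fintype.card (Fin (Module.finrank ℂ E)) : ℝ) ^ (p - 1))
  refine dominating.mono' (measurable.norm.aemeasurable.pow_const p).aestronglyMeasurable
    (.of_forall fun x => ?_)
  rw [Real.norm_of_nonneg (by positivity)]
  exact opNorm_rpow_le_sum_norm_apply_orthonormalBasis_rpow b (A x) hp

end PositiveOperatorFields

section OperatorAverages

variable {𝕜 E F G H X : Type*} [RCLike 𝕜] [MeasurableSpace X] {μ : Measure X}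
  [NormedAddCommGroup E] [NormedSpace 𝕜 E] [NormedAddCommGroup F] [NormedSpace 𝕜 F]
  [NormedAddCommGroup G] [NormedSpace 𝕜 G] [NormedAddCommGroup H] [NormedSpace 𝕜 H]
  {A : X → E →L[𝕜] F} {p M : ℝ}

theorem integrable_norm_rpow_comp (hp : 0 < p) (hA : MemLp A (ENNReal.ofReal p) μ)
    (T : G →L[𝕜] E) : Integrable (fun x => ‖(A x).comp T‖ ^ p) μ :=
  have hAT : MemLp (fun x => (A x).comp T) (ENNReal.ofReal p) μ :=
    ((ContinuousLinearMap.compL 𝕜 G E F).flip T).comp_memLp' hA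
  (integrable_norm_rpow_iff_memLp_ofReal hp hAT.aestronglyMeasurable).2 hAT

theorem memLp_clm_apply {q : ENNReal} (hA : MemLp A q μ) (e : E) : MemLp (fun x => A x e) q μ :=
  (ContinuousLinearMap.apply 𝕜 F e).comp_memLp' hA

theorem integrable_norm_rpow_clm_apply (hp : 0 < p) (hA : MemLp A (ENNReal.ofReal p) μ) (e : E) :
    Integrable (fun x => ‖A x e‖ ^ p) μ :=
  (integrable_norm_rpow_iff_memLp_ofReal hp (memLp_clm_apply hA e).aestronglyMeasurable).2
    (memLp_clm_apply hA e)

theorem integral_norm_comp_apply_rpow_le (hp : 0 < p) (hA : MemLp A (ENNReal.ofReal p) μ)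
    (T : G →L[𝕜] E) (e : G) :
    ∫ x, ‖A x (T e)‖ ^ p ∂μ ≤ (∫ x, ‖(A x).comp T‖ ^ p ∂μ) * ‖e‖ ^ p := by
  rw [← integral_mul_const]
  refine integral_mono (integrable_norm_rpow_clm_apply hp hA (T e))
    ((integrable_norm_rpow_comp hp hA T).mul_const _) fun x => ?_
  rw [← Real.mul_rpow (norm_nonneg _) (norm_nonneg _)]
  exact Real.rpow_le_rpow (norm_nonneg _) (((A x).comp T).le_opNorm e) hp.le

theorem opNorm_comp_rpow_le_integral (hp : 0 < p) (hA : MemLp A (ENNReal.ofReal p) μ) (hM : 0 ≤ M)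
    {V : E →L[𝕜] H} (hV : ∀ e, ‖V e‖ ^ p ≤ M * ∫ x, ‖A x e‖ ^ p ∂μ) (T : G →L[𝕜] E) :
    ‖V.comp T‖ ^ p ≤ M * ∫ x, ‖(A x).comp T‖ ^ p ∂μ := by
  set N := ∫ x, ‖(A x).comp T‖ ^ p ∂μ
  refine (Real.le_rpow_inv_iff_of_pos (norm_nonneg _) (by positivity) hp).1 <|
    ContinuousLinearMap.opNorm_le_bound _ (by positivity) fun e => ?_
  rw [← Real.rpow_le_rpow_iff (norm_nonneg _) (by positivity) hp,
    Real.mul_rpow (by positivity) (norm_nonneg _), Real.rpow_inv_rpow (by positivity) hp.ne']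
  calc ‖V (T e)‖ ^ p ≤ M * ∫ x, ‖A x (T e)‖ ^ p ∂μ := hV (T e)
    _ ≤ M * (N * ‖e‖ ^ p) := by
        gcongr
        exact integral_norm_comp_apply_rpow_le hp hA T e
    _ = M * N * ‖e‖ ^ p := (mul_assoc ..).symm

theorem integral_opNorm_comp_rpow_le {E' : Type*} [NormedAddCommGroup E'] [InnerProductSpace 𝕜 E']
    [FiniteDimensional 𝕜 E'] (hp : 1 ≤ p) (hA : MemLp A (ENNReal.ofReal p) μ) {T : E' →L[𝕜] E}
    (hM : ∀ e, ∫ x, ‖A x (T e)‖ ^ p ∂μ ≤ M * ‖e‖ ^ p) :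
    ∫ x, ‖(A x).comp T‖ ^ p ∂μ ≤ (Module.finrank 𝕜 E' : ℝ) ^ p * M := by
  have hp0 : 0 < p := one_pos.trans_le hp
  let b := stdOrthonormalBasis 𝕜 E'
  set n := Module.finrank 𝕜 E'
  have integrable_apply i := integrable_norm_rpow_clm_apply hp0 hA (T (b i))
  calc ∫ x, ‖(A x).comp T‖ ^ p ∂μ
      ≤ ∫ x, (n : ℝ) ^ (p - 1) * ∑ i, ‖A x (T (b i))‖ ^ p ∂μ := by
        refine integral_mono (integrable_norm_rpow_comp hp0 hA T)
          ((integrable_finsetSum _ fun i _ => integrable_apply i).const_mul _) fun x => ?_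
        simpa only [Fintype.card_fin, ContinuousLinearMap.comp_apply] using
          opNorm_rpow_le_sum_norm_apply_orthonormalBasis_rpow b ((A x).comp T) hp
    _ = (n : ℝ) ^ (p - 1) * ∑ i, ∫ x, ‖A x (T (b i))‖ ^ p ∂μ := by
        rw [integral_const_mul, integral_finsetSum _ fun i _ => integrable_apply i]
    _ ≤ (n : ℝ) ^ (p - 1) * ∑ _i : Fin n, M := by
        gcongr with i
        simpa only [b.norm_eq_one, Real.one_rpow, mul_one] using hM (b i)
    _ = (n : ℝ) ^ p * M := by
        rw [Finset.sum_const, Finset.card_univ, Fintype.card_fin, nsmul_eq_mul, ← mul_assoc]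
        rcases eq_or_ne n 0 with h | h
        · simp only [h, Nat.cast_zero, mul_zero, Real.zero_rpow hp0.ne']
        · rw [Real.rpow_sub_one (Nat.cast_ne_zero.2 h),
            div_mul_cancel₀ _ (Nat.cast_ne_zero.2 h)]

end OperatorAverages

section ReducingOperators

variable {𝕜 E X : Type*} [RCLike 𝕜] [NormedAddCommGroup E] [InnerProductSpace 𝕜 E]
  [MeasurableSpace X] {μ : Measure X} {A B : X → E →L[𝕜] E} {V U : E →L[𝕜] E} {p q K C : ℝ}

theorem le_of_mul_self_le_mul {R : Type*} [Semiring R] [LinearOrder R] [IsStrictOrderedRing R]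
    {a b : R} (hb : 0 ≤ b) (h : a * a ≤ b * a) : a ≤ b := by
  by_contra! hba
  exact (mul_lt_mul_of_pos_right hba (hb.trans_lt hba)).not_ge h

theorem integrable_integral_norm_mul_rpow {R Y : Type*} [NormedRing R] [MeasurableSpace Y]
    {ν : Measure Y} [SFinite ν] {f : X → R} {g : Y → R} (hp : 0 < p) (hq : 0 < q)
    (hf : MemLp f (ENNReal.ofReal p) μ) (hg : MemLp g (ENNReal.ofReal q) ν) :
    Integrable (fun x => (∫ y, ‖f x * g y‖ ^ q ∂ν) ^ (p / q)) μ := by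
  have f_integrable := (integrable_norm_rpow_iff_memLp_ofReal hp hf.aestronglyMeasurable).2 hf
  have g_integrable := (integrable_norm_rpow_iff_memLp_ofReal hq hg.aestronglyMeasurable).2 hg
  have inner_measurable : AEStronglyMeasurable (fun x => ∫ y, ‖f x * g y‖ ^ q ∂ν) μ :=
    ((hf.aestronglyMeasurable.comp_fst.mul hg.aestronglyMeasurable.comp_snd).norm.aemeasurable
      |>.pow_const q).aestronglyMeasurable.integral_prod_right'
  have inner_le (x : X) : ∫ y, ‖f x * g y‖ ^ q ∂ν ≤ ‖f x‖ ^ q * ∫ y, ‖g y‖ ^ q ∂ν := by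
    rw [← integral_const_mul]
    refine integral_mono_of_nonneg (.of_forall fun y => by positivity) (g_integrable.const_mul _)
      (.of_forall fun y => ?_)
    simp only [← Real.mul_rpow (norm_nonneg (f x)) (norm_nonneg (g y))]
    gcongr
    exact norm_mul_le _ _
  refine (f_integrable.mul_const ((∫ y, ‖g y‖ ^ q ∂ν) ^ (p / q))).mono'
    (inner_measurable.aemeasurable.pow_const _).aestronglyMeasurable (.of_forall fun x => ?_)
  calc ‖(∫ y, ‖f x * g y‖ ^ q ∂ν) ^ (p / q)‖ = (∫ y, ‖f x * g y‖ ^ q ∂ν) ^ (p / q) :=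
        Real.norm_of_nonneg (by positivity)
    _ ≤ (‖f x‖ ^ q * ∫ y, ‖g y‖ ^ q ∂ν) ^ (p / q) := by
        gcongr
        exact inner_le x
    _ = ‖f x‖ ^ p * (∫ y, ‖g y‖ ^ q ∂ν) ^ (p / q) := by
        rw [Real.mul_rpow (by positivity) (by positivity), ← Real.rpow_mul (norm_nonneg _),
          mul_div_cancel₀ _ hq.ne']

-- `f` represents the functional `w ↦ ℓ (B · w)`, where `ℓ` is a norming functional of `B · v`.
theorem exists_norming_vector [FiniteDimensional 𝕜 E] (hq : 1 ≤ q)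
    (hB : MemLp B (ENNReal.ofReal q) μ) (v : E) :
    ∃ f : E, ‖inner 𝕜 f v‖ = (∫ x, ‖B x v‖ ^ q ∂μ) ^ (1 / q) ∧
      ∀ w, ‖inner 𝕜 f w‖ ≤ (∫ x, ‖B x w‖ ^ q ∂μ) ^ (1 / q) := by
  have := FiniteDimensional.complete 𝕜 E
  have hq0 : 0 < q := one_pos.trans_le hq
  have : Fact (1 ≤ ENNReal.ofReal q) := ⟨ENNReal.one_le_ofReal.2 hq⟩
  let φ : E →ₗ[𝕜] Lp E (ENNReal.ofReal q) μ :=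
    { toFun w := (memLp_clm_apply hB w).toLp
      map_add' v w := by
        rw [← MemLp.toLp_add]
        simp only [map_add]
        rfl
      map_smul' c w := by
        rw [RingHom.id_apply, ← MemLp.toLp_const_smul]
        simp only [map_smul]
        rfl }
  have norm_φ (w : E) : ‖φ w‖ = (∫ x, ‖B x w‖ ^ q ∂μ) ^ (1 / q) := by
    change ‖(memLp_clm_apply hB w).toLp‖ = _
    rw [Lp.norm_toLp, (memLp_clm_apply hB w).eLpNorm_eq_integral_rpow_norm
      (ENNReal.ofReal_pos.2 hq0).ne' ENNReal.ofReal_ne_top, ENNReal.toReal_ofReal hq0.le,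
      ENNReal.toReal_ofReal (by positivity), one_div]
  obtain ⟨ℓ, norm_ℓ, ℓ_apply⟩ := exists_dual_vector'' 𝕜 (φ v)
  let f := (InnerProductSpace.toDual 𝕜 E).symm (LinearMap.toContinuousLinearMap (ℓ ∘ₗ φ))
  have inner_f (w : E) : inner 𝕜 f w = ℓ (φ w) := InnerProductSpace.toDual_symm_apply
  refine ⟨f, ?_, fun w => ?_⟩
  · rw [inner_f, ℓ_apply, RCLike.norm_ofReal, abs_norm, norm_φ]
  · rw [inner_f, ← norm_φ]
    exact ℓ.le_of_opNorm_le_of_le norm_ℓ le_rfl |>.trans_eq (one_mul _)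

theorem norm_apply_rpow_le_integral_of_inner_le (hq : 0 < q) (hB : MemLp B (ENNReal.ofReal q) μ)
    {T : E →L[𝕜] E} (hT : (T : E →ₗ[𝕜] E).IsSymmetric) {f : E}
    (hf : ∀ w, ‖inner 𝕜 f w‖ ≤ (∫ x, ‖B x w‖ ^ q ∂μ) ^ (1 / q)) :
    ‖T f‖ ^ q ≤ ∫ x, ‖B x * T‖ ^ q ∂μ := by
  set N := ∫ x, ‖B x * T‖ ^ q ∂μ
  have inner_eq : ‖T f‖ * ‖T f‖ = ‖inner 𝕜 f (T (T f))‖ := by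
    have symm : inner 𝕜 (T f) (T f) = inner 𝕜 f (T (T f)) := hT f (T f)
    rw [← symm, inner_self_eq_norm_sq_to_K, norm_pow, RCLike.norm_ofReal, abs_norm, sq]
  have sq_le : ‖T f‖ * ‖T f‖ ≤ N ^ q⁻¹ * ‖T f‖ :=
    calc ‖T f‖ * ‖T f‖ ≤ (∫ x, ‖B x (T (T f))‖ ^ q ∂μ) ^ (1 / q) := inner_eq.trans_le (hf _)
      _ ≤ (N * ‖T f‖ ^ q) ^ (1 / q) := by
          gcongr
          exact integral_norm_comp_apply_rpow_le hq hB T (T f)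
      _ = N ^ q⁻¹ * ‖T f‖ := by
          rw [one_div, Real.mul_rpow (by positivity) (by positivity),
            Real.rpow_rpow_inv (norm_nonneg _) hq.ne']
  exact (Real.le_rpow_inv_iff_of_pos (norm_nonneg _) (by positivity) hq).1
    (le_of_mul_self_le_mul (by positivity) sq_le)

/-- `V` is a reducing operator, with constant `K`, of the operator field `A` in `L^p(μ)`: a positive
operator for which `‖V e‖` is comparable to the `L^p(μ)` norm of `x ↦ A x e`. For a matrix weight
`W`, the field `A` is `W^{1/p}` and `μ` is the normalized Lebesgue measure on a cube. -/
structure IsReducing (p K : ℝ) (A : X → E →L[𝕜] E) (μ : Measure X) (V : E →L[𝕜] E) : Prop where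
  isPositive : V.IsPositive
  lower : ∀ e, (∫ x, ‖A x e‖ ^ p ∂μ) ^ (1 / p) ≤ ‖V e‖
  upper : ∀ e, ‖V e‖ ≤ K * (∫ x, ‖A x e‖ ^ p ∂μ) ^ (1 / p)

namespace IsReducing

theorem integral_rpow_le (hV : IsReducing p K A μ V) (hp : 0 < p) (e : E) :
    ∫ x, ‖A x e‖ ^ p ∂μ ≤ ‖V e‖ ^ p := by
  rw [← Real.rpow_inv_le_iff_of_pos (by positivity) (norm_nonneg _) hp, ← one_div]
  exact hV.lower e

theorem norm_apply_rpow_le (hV : IsReducing p K A μ V) (hp : 0 < p) (hK : 0 ≤ K) (e : E) :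
    ‖V e‖ ^ p ≤ K ^ p * ∫ x, ‖A x e‖ ^ p ∂μ :=
  calc ‖V e‖ ^ p ≤ (K * (∫ x, ‖A x e‖ ^ p ∂μ) ^ (1 / p)) ^ p := by
        gcongr
        exact hV.upper e
    _ = K ^ p * ∫ x, ‖A x e‖ ^ p ∂μ := by
        rw [Real.mul_rpow hK (by positivity), one_div, Real.rpow_inv_rpow (by positivity) hp.ne']

theorem norm_mul_rpow_le (hV : IsReducing p K A μ V) (hp : 0 < p) (hK : 0 ≤ K)
    (hA : MemLp A (ENNReal.ofReal p) μ) (T : E →L[𝕜] E) :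
    ‖V * T‖ ^ p ≤ K ^ p * ∫ x, ‖A x * T‖ ^ p ∂μ :=
  opNorm_comp_rpow_le_integral hp hA (by positivity) (hV.norm_apply_rpow_le hp hK) T

theorem integral_norm_mul_inverse_rpow_le [FiniteDimensional 𝕜 E] (hV : IsReducing p K A μ V)
    (hp : 1 ≤ p) (hA : MemLp A (ENNReal.ofReal p) μ) (hVU : V * U = 1) :
    ∫ x, ‖A x * U‖ ^ p ∂μ ≤ (Module.finrank 𝕜 E : ℝ) ^ p := by
  have bound (e : E) : ∫ x, ‖A x (U e)‖ ^ p ∂μ ≤ 1 * ‖e‖ ^ p := by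
    have apply_inverse : V (U e) = e := DFunLike.congr_fun hVU e
    simpa only [apply_inverse, one_mul] using hV.integral_rpow_le (one_pos.trans_le hp) (U e)
  exact (integral_opNorm_comp_rpow_le hp hA bound).trans_eq (mul_one _)

/- With `g = U f`, `‖g‖² = ⟪V g, U g⟫ = ⟪f, U g⟫ = ⟪B x f, A x (U g)⟫` for every `x`; Hölder's
inequality bounds the average of the right-hand side, and `‖A · (U g)‖` has norm at most
`‖V (U g)‖ = ‖g‖`. -/
theorem norm_inverse_apply_rpow_le [IsProbabilityMeasure μ] (hV : IsReducing p K A μ V)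
    (hpq : p.HolderConjugate q) (hA : MemLp A (ENNReal.ofReal p) μ)
    (hB : MemLp B (ENNReal.ofReal q) μ) (hpos : ∀ x, (A x).IsPositive) (hAB : ∀ x, A x * B x = 1)
    (hVU : V * U = 1) (f : E) : ‖U f‖ ^ q ≤ ∫ x, ‖B x f‖ ^ q ∂μ := by
  have apply_inverse (e : E) : V (U e) = e := DFunLike.congr_fun hVU e
  set g := U f
  have pointwise (x : X) : ‖g‖ ^ 2 ≤ ‖B x f‖ * ‖A x (U g)‖ :=
    calc ‖g‖ ^ 2 = ‖inner 𝕜 g (V (U g))‖ := by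
          rw [apply_inverse, inner_self_eq_norm_sq_to_K, norm_pow, RCLike.norm_ofReal, abs_norm]
      _ = ‖inner 𝕜 (A x (B x f)) (U g)‖ := by
          rw [← hV.isPositive.inner_left_eq_inner_right, apply_inverse,
            ← mul_apply_eq_comp (A x), hAB, one_apply_eq_self]
      _ ≤ _ := by
          rw [(hpos x).inner_left_eq_inner_right]
          exact norm_inner_le_norm _ _
  have memLp_B := (memLp_clm_apply hB f).norm
  have memLp_A := (memLp_clm_apply hA (U g)).norm
  have := hpq.symm.ennrealOfReal
  set N := ∫ x, ‖B x f‖ ^ q ∂μ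
  have sq_le : ‖g‖ * ‖g‖ ≤ N ^ (1 / q) * ‖g‖ :=
    calc ‖g‖ * ‖g‖ = ∫ _, ‖g‖ ^ 2 ∂μ := by rw [integral_const, probReal_univ, one_smul, sq]
      _ ≤ ∫ x, ‖B x f‖ * ‖A x (U g)‖ ∂μ :=
          integral_mono (integrable_const _) (memLp_B.integrable_mul memLp_A) pointwise
      _ ≤ N ^ (1 / q) * (∫ x, ‖A x (U g)‖ ^ p ∂μ) ^ (1 / p) :=
          integral_mul_le_Lp_mul_Lq_of_nonneg hpq.symm (.of_forall fun _ => norm_nonneg _)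
            (.of_forall fun _ => norm_nonneg _) memLp_B memLp_A
      _ ≤ N ^ (1 / q) * ‖V (U g)‖ := by
          gcongr
          exact hV.lower (U g)
      _ = N ^ (1 / q) * ‖g‖ := by rw [apply_inverse]
  rw [one_div] at sq_le
  exact (Real.le_rpow_inv_iff_of_pos (norm_nonneg _) (by positivity) hpq.symm.pos).1
    (le_of_mul_self_le_mul (by positivity) sq_le)

theorem norm_inverse_mul_rpow_le [IsProbabilityMeasure μ] (hV : IsReducing p K A μ V)
    (hpq : p.HolderConjugate q) (hA : MemLp A (ENNReal.ofReal p) μ)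
    (hB : MemLp B (ENNReal.ofReal q) μ) (hpos : ∀ x, (A x).IsPositive) (hAB : ∀ x, A x * B x = 1)
    (hVU : V * U = 1) (T : E →L[𝕜] E) : ‖U * T‖ ^ q ≤ ∫ x, ‖B x * T‖ ^ q ∂μ :=
  (opNorm_comp_rpow_le_integral hpq.symm.pos hB zero_le_one (fun f =>
    (hV.norm_inverse_apply_rpow_le hpq hA hB hpos hAB hVU f).trans_eq (one_mul _).symm) T).trans_eq
    (one_mul _)

theorem integral_norm_apply_rpow_le [SFinite μ] [FiniteDimensional 𝕜 E]
    (hV : IsReducing p K A μ V) (hpq : p.HolderConjugate q) (hK : 0 ≤ K)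
    (hA : MemLp A (ENNReal.ofReal p) μ) (hB : MemLp B (ENNReal.ofReal q) μ)
    (hApos : ∀ x, (A x).IsPositive) (hBpos : ∀ x, (B x).IsPositive)
    (hC : ∫ x, (∫ t, ‖A x * B t‖ ^ q ∂μ) ^ (p / q) ∂μ ≤ C) (e : E) :
    ∫ x, ‖B x (V e)‖ ^ q ∂μ ≤ K ^ q * C ^ (q / p) * ‖e‖ ^ q := by
  have := FiniteDimensional.complete 𝕜 E
  have hp0 := hpq.pos
  have hq0 := hpq.symm.pos
  have C_nonneg : 0 ≤ C := le_trans (by positivity) hC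
  obtain ⟨f, hfv, hf⟩ := exists_norming_vector hpq.symm.lt.le hB (V e)
  have norm_swap (x t : X) : ‖B t * A x‖ = ‖A x * B t‖ := by
    rw [← norm_star, star_mul, (hApos x).isSelfAdjoint.star_eq, (hBpos t).isSelfAdjoint.star_eq]
  have norm_apply_le (x : X) : ‖A x f‖ ^ p ≤ (∫ t, ‖A x * B t‖ ^ q ∂μ) ^ (p / q) := by
    simp only [← norm_swap x]
    calc ‖A x f‖ ^ p = (‖A x f‖ ^ q) ^ (p / q) := by
          rw [← Real.rpow_mul (norm_nonneg _), mul_div_cancel₀ _ hq0.ne']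
      _ ≤ _ := by
          gcongr
          exact norm_apply_rpow_le_integral_of_inner_le hq0 hB (hApos x).isSymmetric hf
  have norm_Vf : ‖V f‖ ^ p ≤ K ^ p * C :=
    calc ‖V f‖ ^ p ≤ K ^ p * ∫ x, ‖A x f‖ ^ p ∂μ := hV.norm_apply_rpow_le hp0 hK f
      _ ≤ K ^ p * ∫ x, (∫ t, ‖A x * B t‖ ^ q ∂μ) ^ (p / q) ∂μ := by
          refine mul_le_mul_of_nonneg_left ?_ (by positivity)
          exact integral_mono (integrable_norm_rpow_clm_apply hp0 hA f)
            (integrable_integral_norm_mul_rpow hp0 hq0 hA hB) norm_apply_le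
      _ ≤ K ^ p * C := by gcongr
  calc ∫ x, ‖B x (V e)‖ ^ q ∂μ = ‖inner 𝕜 f (V e)‖ ^ q := by
        rw [hfv, one_div, Real.rpow_inv_rpow (by positivity) hq0.ne']
    _ ≤ (‖V f‖ * ‖e‖) ^ q := by
        rw [← hV.isPositive.inner_left_eq_inner_right]
        gcongr
        exact norm_inner_le_norm _ _
    _ = (‖V f‖ ^ p) ^ (q / p) * ‖e‖ ^ q := by
        rw [Real.mul_rpow (norm_nonneg _) (norm_nonneg _), ← Real.rpow_mul (norm_nonneg _),
          mul_div_cancel₀ _ hp0.ne']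
    _ ≤ (K ^ p * C) ^ (q / p) * ‖e‖ ^ q := by gcongr
    _ = K ^ q * C ^ (q / p) * ‖e‖ ^ q := by
        rw [Real.mul_rpow (by positivity) C_nonneg, ← Real.rpow_mul hK, mul_div_cancel₀ _ hp0.ne']

theorem integral_norm_mul_rpow_le [SFinite μ] [FiniteDimensional 𝕜 E]
    (hV : IsReducing p K A μ V) (hpq : p.HolderConjugate q) (hK : 0 ≤ K)
    (hA : MemLp A (ENNReal.ofReal p) μ) (hB : MemLp B (ENNReal.ofReal q) μ)
    (hApos : ∀ x, (A x).IsPositive) (hBpos : ∀ x, (B x).IsPositive)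
    (hC : ∫ x, (∫ t, ‖A x * B t‖ ^ q ∂μ) ^ (p / q) ∂μ ≤ C) :
    ∫ x, ‖B x * V‖ ^ q ∂μ ≤ (Module.finrank 𝕜 E : ℝ) ^ q * (K ^ q * C ^ (q / p)) :=
  integral_opNorm_comp_rpow_le hpq.symm.lt.le hB
    (hV.integral_norm_apply_rpow_le hpq hK hA hB hApos hBpos hC)

end IsReducing

end ReducingOperators

section WeakType

variable {X : Type*} [MeasurableSpace X] {μ : Measure X} {𝒮 : Set (Set X)} {t : Set X}

theorem mul_measure_sUnion_le_setLIntegral {g : X → ENNReal} {c : ENNReal} (hc : 𝒮.Countable)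
    (hm : ∀ s ∈ 𝒮, MeasurableSet s) (hd : 𝒮.PairwiseDisjoint id) (ht : ∀ s ∈ 𝒮, s ⊆ t)
    (h : ∀ s ∈ 𝒮, c * μ s ≤ ∫⁻ x in s, g x ∂μ) : c * μ (⋃₀ 𝒮) ≤ ∫⁻ x in t, g x ∂μ :=
  calc c * μ (⋃₀ 𝒮) = ∑' s : 𝒮, c * μ s := by
        rw [measure_sUnion hc hd hm, ENNReal.tsum_mul_left]
    _ ≤ ∑' s : 𝒮, ∫⁻ x in s, g x ∂μ := ENNReal.tsum_le_tsum fun s => h s s.2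
    _ = ∫⁻ x in ⋃₀ 𝒮, g x ∂μ := by
        rw [Set.sUnion_eq_biUnion]
        exact (lintegral_biUnion hc hm hd g).symm
    _ ≤ ∫⁻ x in t, g x ∂μ := lintegral_mono_set (Set.sUnion_subset ht)

theorem measure_sUnion_le_of_le_setAverage {g : X → ℝ} {c : ℝ} (hc : 𝒮.Countable)
    (hm : ∀ s ∈ 𝒮, MeasurableSet s) (hd : 𝒮.PairwiseDisjoint id) (ht : ∀ s ∈ 𝒮, s ⊆ t)
    (ht_top : μ t ≠ ⊤) (hg : ∀ x, 0 ≤ g x) (hgi : IntegrableOn g t μ) (hc0 : 0 < c)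
    (h : ∀ s ∈ 𝒮, c ≤ ⨍ x in s, g x ∂μ) :
    μ (⋃₀ 𝒮) ≤ ENNReal.ofReal ((⨍ x in t, g x ∂μ) / c) * μ t := by
  have setLIntegral_eq {s : Set X} (hs : s ⊆ t) :
      ∫⁻ x in s, ENNReal.ofReal (g x) ∂μ = ENNReal.ofReal (⨍ x in s, g x ∂μ) * μ s := by
    have hs_top : μ s ≠ ⊤ := measure_ne_top_of_subset hs ht_top
    rw [← ofReal_integral_eq_lintegral_ofReal (hgi.mono_set hs) (.of_forall hg),
      ← measure_smul_setAverage g hs_top, smul_eq_mul, mul_comm,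
      ENNReal.ofReal_mul' measureReal_nonneg, ofReal_measureReal hs_top]
  have covering := mul_measure_sUnion_le_setLIntegral (c := ENNReal.ofReal c)
    (g := fun x => ENNReal.ofReal (g x)) (μ := μ) hc hm hd ht fun s hs => by
      rw [setLIntegral_eq (ht s hs)]
      gcongr
      exact h s hs
  rw [setLIntegral_eq subset_rfl] at covering
  rw [ENNReal.ofReal_div_of_pos hc0, ENNReal.mul_comm_div, ← mul_div_assoc]
  exact (ENNReal.le_div_iff_mul_le (.inl (ENNReal.ofReal_pos.2 hc0).ne')
    (.inl ENNReal.ofReal_ne_top)).2 (by rwa [mul_comm])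

end WeakType

section DyadicCubes

variable {d : ℕ} {I J : ℤ × (Fin d → ℤ)}

theorem mem_dCube_iff_floor {x : Fin d → ℝ} :
    x ∈ dCube d I ↔ ∀ i, ⌊x i * (2 : ℝ) ^ I.1⌋ = I.2 i := by
  have hpos : (0 : ℝ) < 2 ^ I.1 := by positivity
  simp only [dCube, Set.mem_univ_pi, Set.mem_Ico, Int.floor_eq_iff, _root_.zpow_neg,
    ← div_eq_mul_inv, div_le_iff₀ hpos, lt_div_iff₀ hpos]

theorem dCube_subset_dCube_of_mem (hIJ : J.1 ≤ I.1) {x : Fin d → ℝ} (hxI : x ∈ dCube d I)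
    (hxJ : x ∈ dCube d J) : dCube d I ⊆ dCube d J := by
  obtain ⟨r, hr⟩ := Int.le.dest hIJ
  have floor_coarsen (a : ℝ) : ⌊a * 2 ^ J.1⌋ = ⌊a * 2 ^ I.1⌋ / (2 ^ r : ℕ) := by
    rw [← Int.floor_div_natCast, ← hr, zpow_add₀ two_ne_zero, zpow_natCast, Nat.cast_pow,
      Nat.cast_two, ← mul_assoc, mul_div_cancel_right₀ _ (pow_ne_zero r two_ne_zero)]
  intro y hy
  rw [mem_dCube_iff_floor] at *
  intro i
  rw [← hxJ i, floor_coarsen, floor_coarsen, hy i, hxI i]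

theorem dCube_subset_or_subset_or_disjoint (I J : ℤ × (Fin d → ℤ)) :
    dCube d I ⊆ dCube d J ∨ dCube d J ⊆ dCube d I ∨ Disjoint (dCube d I) (dCube d J) := by
  by_cases h : Disjoint (dCube d I) (dCube d J)
  · exact .inr (.inr h)
  · obtain ⟨x, hxI, hxJ⟩ := Set.not_disjoint_iff.1 h
    rcases le_total J.1 I.1 with hle | hle
    · exact .inl (dCube_subset_dCube_of_mem hle hxI hxJ)
    · exact .inr (.inl (dCube_subset_dCube_of_mem hle hxJ hxI))

theorem isCube_dCube (I : ℤ × (Fin d → ℤ)) : IsCube (dCube d I) :=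
  ⟨fun i => (I.2 i : ℝ) * (2 : ℝ) ^ (-I.1), (2 : ℝ) ^ (-I.1), by positivity, by
    simp only [dCube, add_mul, one_mul]⟩

theorem measurableSet_dCube (I : ℤ × (Fin d → ℤ)) : MeasurableSet (dCube d I) :=
  .univ_pi fun _ => measurableSet_Ico

theorem volume_dCube (I : ℤ × (Fin d → ℤ)) :
    volume (dCube d I) = ENNReal.ofReal (2 ^ (-I.1)) ^ d := by
  simp only [dCube, volume_pi_pi, Real.volume_Ico, add_mul, one_mul, add_sub_cancel_left,
    Finset.prod_const, Finset.card_univ, Fintype.card_fin]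

theorem volume_dCube_ne_zero (I : ℤ × (Fin d → ℤ)) : volume (dCube d I) ≠ 0 := by
  rw [volume_dCube]
  exact pow_ne_zero d (ENNReal.ofReal_pos.2 (by positivity)).ne'

theorem volume_dCube_ne_top (I : ℤ × (Fin d → ℤ)) : volume (dCube d I) ≠ ⊤ := by
  rw [volume_dCube]
  exact ENNReal.pow_ne_top ENNReal.ofReal_ne_top

theorem dCube_injective (hd : d ≠ 0) : Function.Injective (dCube d) := by
  intro I J h
  have generation_eq : I.1 = J.1 := by
    have hvol := congrArg volume h
    rw [volume_dCube, volume_dCube, ← ENNReal.ofReal_pow (by positivity),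
      ← ENNReal.ofReal_pow (by positivity),
      ENNReal.ofReal_eq_ofReal_iff (by positivity) (by positivity),
      pow_left_inj₀ (by positivity) (by positivity) hd] at hvol
    exact neg_injective (zpow_right_injective₀ two_pos (by norm_num) hvol)
  obtain ⟨x, hxI⟩ := nonempty_of_measure_ne_zero (volume_dCube_ne_zero I)
  have hxJ := h ▸ hxI
  rw [mem_dCube_iff_floor] at hxI hxJ
  exact Prod.ext generation_eq (funext fun i => by rw [← hxI i, ← hxJ i, generation_eq])

theorem isProbabilityMeasure_cond_dCube (I : ℤ × (Fin d → ℤ)) :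
    IsProbabilityMeasure (ProbabilityTheory.cond volume (dCube d I)) :=
  ProbabilityTheory.cond_isProbabilityMeasure_of_finite (volume_dCube_ne_zero I)
    (volume_dCube_ne_top I)

theorem avg_dCube_eq_integral_cond (I : ℤ × (Fin d → ℤ)) (g : (Fin d → ℝ) → ℝ) :
    avg (dCube d I) g = ∫ x, g x ∂ProbabilityTheory.cond volume (dCube d I) := by
  rw [ProbabilityTheory.cond, integral_smul_measure, avg, ENNReal.toReal_inv, smul_eq_mul]

end DyadicCubes

section StoppingFamilies

variable {d n : ℕ} {p p' l₁ l₂ : ℝ} {V : ℤ × (Fin d → ℤ) → Matrix (Fin n) (Fin n) ℂ}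
  {I J K : ℤ × (Fin d → ℤ)}

theorem MaxBad.dCube_eq_or_disjoint (hJ : MaxBad p p' l₁ l₂ V I J)
    (hK : MaxBad p p' l₁ l₂ V I K) :
    dCube d J = dCube d K ∨ Disjoint (dCube d J) (dCube d K) := by
  rcases dCube_subset_or_subset_or_disjoint J K with h | h | h
  · exact .inl (hJ.2.2 K h hK.1 hK.2.1).symm
  · exact .inl (hK.2.2 J h hJ.1 hJ.2.1)
  · exact .inr h

theorem volume_iUnion_dCube_le_quarter {S : Set (ℤ × (Fin d → ℤ))}
    (hS : ∀ J ∈ S, MaxBad p p' l₁ l₂ V I J) {g : (Fin d → ℝ) → ℝ} {c : ℝ} (hg : ∀ x, 0 ≤ g x)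
    (hgi : IntegrableOn g (dCube d I)) (hc : 0 < c) (hJ : ∀ J ∈ S, c ≤ avg (dCube d J) g)
    (hI : avg (dCube d I) g ≤ c / 4) :
    volume (⋃ J ∈ S, dCube d J) ≤ volume (dCube d I) / 4 := by
  have avg_eq (J : ℤ × (Fin d → ℤ)) : avg (dCube d J) g = ⨍ x in dCube d J, g x :=
    (setAverage_eq ..).symm
  have disjoint_images : (dCube d '' S).PairwiseDisjoint id := by
    rintro _ ⟨J, hJS, rfl⟩ _ ⟨K, hKS, rfl⟩ hne
    exact ((hS J hJS).dCube_eq_or_disjoint (hS K hKS)).resolve_left hne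
  have weak_type := measure_sUnion_le_of_le_setAverage (𝒮 := dCube d '' S)
    ((Set.to_countable S).image _) (Set.forall_mem_image.2 fun J _ => measurableSet_dCube J)
    disjoint_images (Set.forall_mem_image.2 fun J hJS => (hS J hJS).1) (volume_dCube_ne_top I)
    hg hgi hc (Set.forall_mem_image.2 fun J hJS => (hJ J hJS).trans_eq (avg_eq J))
  rw [Set.sUnion_image, ← avg_eq] at weak_type
  refine weak_type.trans ?_
  have ratio_le : avg (dCube d I) g / c ≤ 4⁻¹ := by
    rw [div_le_iff₀ hc]
    linarith
  calc ENNReal.ofReal (avg (dCube d I) g / c) * volume (dCube d I)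
      ≤ ENNReal.ofReal 4⁻¹ * volume (dCube d I) := by gcongr
    _ = volume (dCube d I) / 4 := by
        rw [ENNReal.ofReal_inv_of_pos four_pos, ENNReal.ofReal_ofNat, mul_comm, div_eq_mul_inv]

theorem volume_iUnion_maxBad_le_half {g₁ g₂ : (Fin d → ℝ) → ℝ} (hl₁ : 0 < l₁) (hl₂ : 0 < l₂)
    (hg₁ : ∀ x, 0 ≤ g₁ x) (hg₂ : ∀ x, 0 ≤ g₂ x)
    (hgi₁ : IntegrableOn g₁ (dCube d I)) (hgi₂ : IntegrableOn g₂ (dCube d I))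
    (hJ₁ : ∀ J, dCube d J ⊆ dCube d I → matNorm (V J * (V I)⁻¹) ^ p ≤ avg (dCube d J) g₁)
    (hJ₂ : ∀ J, dCube d J ⊆ dCube d I → matNorm ((V J)⁻¹ * V I) ^ p' ≤ avg (dCube d J) g₂)
    (hI₁ : avg (dCube d I) g₁ ≤ l₁ / 4) (hI₂ : avg (dCube d I) g₂ ≤ l₂ / 4) :
    volume (⋃ J ∈ {J | MaxBad p p' l₁ l₂ V I J}, dCube d J) ≤ volume (dCube d I) / 2 := by
  let S₁ := {J | MaxBad p p' l₁ l₂ V I J ∧ l₁ < matNorm (V J * (V I)⁻¹) ^ p}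
  let S₂ := {J | MaxBad p p' l₁ l₂ V I J ∧ l₂ < matNorm ((V J)⁻¹ * V I) ^ p'}
  have maxBad_split : {J | MaxBad p p' l₁ l₂ V I J} = S₁ ∪ S₂ := by
    ext J
    exact ⟨fun h => h.2.1.imp (And.intro h) (And.intro h), fun h => h.elim And.left And.left⟩
  have quarter₁ := volume_iUnion_dCube_le_quarter (S := S₁) (fun J hJ => hJ.1) hg₁ hgi₁ hl₁
    (fun J hJ => hJ.2.le.trans (hJ₁ J hJ.1.1)) hI₁
  have quarter₂ := volume_iUnion_dCube_le_quarter (S := S₂) (fun J hJ => hJ.1) hg₂ hgi₂ hl₂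
    (fun J hJ => hJ.2.le.trans (hJ₂ J hJ.1.1)) hI₂
  rw [maxBad_split, Set.biUnion_union]
  calc volume ((⋃ J ∈ S₁, dCube d J) ∪ ⋃ J ∈ S₂, dCube d J)
      ≤ volume (dCube d I) / 4 + volume (dCube d I) / 4 :=
        (measure_union_le _ _).trans (add_le_add quarter₁ quarter₂)
    _ = volume (dCube d I) / 2 := by
        rw [ENNReal.div_add_div_same, ← two_mul, show (4 : ENNReal) = 2 * 2 by norm_num,
          ENNReal.mul_div_mul_left _ _ two_ne_zero ENNReal.ofNat_ne_top]

theorem stopFam_succ (j : ℕ) (I : ℤ × (Fin d → ℤ)) :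
    StopFam p p' l₁ l₂ V (j + 1) I =
      ⋃ K ∈ {J | MaxBad p p' l₁ l₂ V I J}, StopFam p p' l₁ l₂ V j K := by
  induction j with
  | zero => simp only [StopFam, Set.biUnion_singleton, Set.biUnion_of_singleton]
  | succ j ih =>
    rw [StopFam, ih, Set.biUnion_iUnion]
    simp only [Set.biUnion_iUnion, StopFam]

-- In dimension `0` all cubes coincide, and the half-measure bound says that none is stopping.
theorem pairwiseDisjoint_dCube_maxBad
    (h : volume (⋃ J ∈ {J | MaxBad p p' l₁ l₂ V I J}, dCube d J) ≤ volume (dCube d I) / 2) :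
    {J | MaxBad p p' l₁ l₂ V I J}.PairwiseDisjoint (dCube d) := by
  intro J hJ K hK hne
  refine (MaxBad.dCube_eq_or_disjoint hJ hK).resolve_left fun heq => ?_
  rcases eq_or_ne d 0 with rfl | hd
  · have hJI : dCube 0 J = dCube 0 I := by
      simp only [dCube, Set.pi, IsEmpty.forall_iff, Set.ofPred_true]
    have volume_le_half : volume (dCube 0 I) ≤ volume (dCube 0 I) / 2 := by
      refine (measure_mono ?_).trans h
      rw [← hJI]
      exact Set.subset_biUnion_of_mem (u := dCube 0) hJ
    exact volume_le_half.not_gt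
      (ENNReal.half_lt_self (volume_dCube_ne_zero I) (volume_dCube_ne_top I))
  · exact hne (dCube_injective hd heq)

theorem volume_iUnion_stopFam_le
    (h : ∀ I, volume (⋃ J ∈ {J | MaxBad p p' l₁ l₂ V I J}, dCube d J) ≤ volume (dCube d I) / 2)
    (I : ℤ × (Fin d → ℤ)) (j : ℕ) :
    volume (⋃ J ∈ StopFam p p' l₁ l₂ V j I, dCube d J) ≤ volume (dCube d I) / 2 ^ j := by
  induction j generalizing I with
  | zero => simp only [StopFam, Set.biUnion_singleton, pow_zero, div_one, le_refl]
  | succ j ih =>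
    set S := {J | MaxBad p p' l₁ l₂ V I J} with hS
    calc volume (⋃ J ∈ StopFam p p' l₁ l₂ V (j + 1) I, dCube d J)
        = volume (⋃ K ∈ S, ⋃ J ∈ StopFam p p' l₁ l₂ V j K, dCube d J) := by
          rw [stopFam_succ, ← hS]
          simp only [Set.biUnion_iUnion]
      _ ≤ ∑' K : S, volume (⋃ J ∈ StopFam p p' l₁ l₂ V j K, dCube d J) :=
          measure_biUnion_le _ S.to_countable _
      _ ≤ ∑' K : S, volume (dCube d K) / 2 ^ j := ENNReal.tsum_le_tsum fun K => ih K
      _ = volume (⋃ K ∈ S, dCube d K) / 2 ^ j := by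
          simp only [div_eq_mul_inv, ENNReal.tsum_mul_right]
          rw [measure_biUnion S.to_countable (pairwiseDisjoint_dCube_maxBad (h I))
            fun J _ => measurableSet_dCube J]
      _ ≤ volume (dCube d I) / 2 / 2 ^ j := ENNReal.div_le_div_right (h I) _
      _ = volume (dCube d I) / 2 ^ (j + 1) := by
          rw [div_eq_mul_inv, div_eq_mul_inv, mul_assoc, ← ENNReal.mul_inv (by simp) (by simp),
            ← pow_succ', ← div_eq_mul_inv]

end StoppingFamilies

section MatrixWeights

variable {d n : ℕ} {p p' q K Cw l₁ l₂ : ℝ} {W Wp Wm : (Fin d → ℝ) → Matrix (Fin n) (Fin n) ℂ}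
  {V : ℤ × (Fin d → ℤ) → Matrix (Fin n) (Fin n) ℂ} {I : ℤ × (Fin d → ℤ)}

theorem isPositive_toEuclideanCLM {M : Matrix (Fin n) (Fin n) ℂ} (hM : M.PosDef) :
    (toEuclideanCLM (𝕜 := ℂ) M).IsPositive :=
  (ContinuousLinearMap.isPositive_toLinearMap_iff _).1
    (isPositive_toEuclideanLin_iff.2 hM.posSemidef)

theorem toEuclideanCLM_mul_inv {M : Matrix (Fin n) (Fin n) ℂ} (hM : M.PosDef) :
    toEuclideanCLM (𝕜 := ℂ) M * toEuclideanCLM (𝕜 := ℂ) M⁻¹ = 1 := by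
  rw [← map_mul, mul_nonsing_inv _ ((isUnit_iff_isUnit_det M).1 hM.isUnit), map_one]

theorem memLp_toEuclideanCLM_restrict_dCube (hq : 1 ≤ q) (hW : ∀ x, (W x).PosDef)
    (hi : ∀ e, IntegrableOn (fun x => vecNorm ((W x).mulVec e) ^ q) (dCube d I)) :
    MemLp (fun x => toEuclideanCLM (𝕜 := ℂ) (W x)) (ENNReal.ofReal q)
      (volume.restrict (dCube d I)) :=
  memLp_of_isPositive_of_forall_integrable hq (fun x => isPositive_toEuclideanCLM (hW x))
    fun e => hi (WithLp.ofLp e)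

theorem memLp_toEuclideanCLM_cond_dCube (hq : 1 ≤ q) (hW : ∀ x, (W x).PosDef)
    (hi : ∀ e, IntegrableOn (fun x => vecNorm ((W x).mulVec e) ^ q) (dCube d I)) :
    MemLp (fun x => toEuclideanCLM (𝕜 := ℂ) (W x)) (ENNReal.ofReal q)
      (ProbabilityTheory.cond volume (dCube d I)) :=
  (memLp_toEuclideanCLM_restrict_dCube hq hW hi).smul_measure
    (ENNReal.inv_ne_top.2 (volume_dCube_ne_zero I))

theorem integrableOn_matNorm_mul_rpow (hq : 1 ≤ q) (hW : ∀ x, (W x).PosDef)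
    (hi : ∀ e, IntegrableOn (fun x => vecNorm ((W x).mulVec e) ^ q) (dCube d I))
    (M : Matrix (Fin n) (Fin n) ℂ) :
    IntegrableOn (fun x => matNorm (W x * M) ^ q) (dCube d I) := by
  simp only [matNorm, map_mul]
  exact integrable_norm_rpow_comp (one_pos.trans_le hq)
    (memLp_toEuclideanCLM_restrict_dCube hq hW hi) _

theorem isReducing_toEuclideanCLM (hV : (V I).PosDef)
    (hred : ∀ e : Fin n → ℂ,
      (avg (dCube d I) fun x => vecNorm ((W x).mulVec e) ^ p) ^ (1 / p)
        ≤ vecNorm ((V I).mulVec e) ∧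
      vecNorm ((V I).mulVec e)
        ≤ K * (avg (dCube d I) fun x => vecNorm ((W x).mulVec e) ^ p) ^ (1 / p)) :
    IsReducing p K (fun x => toEuclideanCLM (𝕜 := ℂ) (W x))
      (ProbabilityTheory.cond volume (dCube d I)) (toEuclideanCLM (𝕜 := ℂ) (V I)) := by
  simp only [avg_dCube_eq_integral_cond] at hred
  exact ⟨isPositive_toEuclideanCLM hV, fun e => (hred (WithLp.ofLp e)).1,
    fun e => (hred (WithLp.ofLp e)).2⟩

theorem volume_iUnion_maxBad_le_half_of_isReducing (hpp' : p.HolderConjugate p') (hK : 0 ≤ K)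
    (hWp : ∀ x, (Wp x).PosDef) (hWm : ∀ x, Wm x = (Wp x)⁻¹)
    (hAp : ∀ I, avg (dCube d I)
      (fun x => (avg (dCube d I) fun t => matNorm (Wp x * Wm t) ^ p') ^ (p / p')) ≤ Cw)
    (hi : ∀ I e, IntegrableOn (fun x => vecNorm ((Wp x).mulVec e) ^ p) (dCube d I))
    (hi' : ∀ I e, IntegrableOn (fun x => vecNorm ((Wm x).mulVec e) ^ p') (dCube d I))
    (hV : ∀ I, (V I).PosDef)
    (hred : ∀ I, IsReducing p K (fun x => toEuclideanCLM (𝕜 := ℂ) (Wp x))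
      (ProbabilityTheory.cond volume (dCube d I)) (toEuclideanCLM (𝕜 := ℂ) (V I)))
    (hl₁ : 0 < l₁) (hl₂ : 0 < l₂) (hKl₁ : K ^ p * (n : ℝ) ^ p ≤ l₁ / 4)
    (hKl₂ : (n : ℝ) ^ p' * (K ^ p' * Cw ^ (p' / p)) ≤ l₂ / 4) (I : ℤ × (Fin d → ℤ)) :
    volume (⋃ J ∈ {J | MaxBad p p' l₁ l₂ V I J}, dCube d J) ≤ volume (dCube d I) / 2 := by
  have hp := hpp'.lt.le
  have hp' := hpp'.symm.lt.le
  have hWm_posDef (x) : (Wm x).PosDef := hWm x ▸ (hWp x).inv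
  have isPositive_Wp (x) := isPositive_toEuclideanCLM (hWp x)
  have isPositive_Wm (x) := isPositive_toEuclideanCLM (hWm_posDef x)
  have memLp_Wp (J) := memLp_toEuclideanCLM_cond_dCube hp hWp (hi J)
  have memLp_Wm (J) := memLp_toEuclideanCLM_cond_dCube hp' hWm_posDef (hi' J)
  have Wp_mul_Wm (x) : toEuclideanCLM (𝕜 := ℂ) (Wp x) * toEuclideanCLM (𝕜 := ℂ) (Wm x) = 1 :=
    hWm x ▸ toEuclideanCLM_mul_inv (hWp x)
  have V_mul_inv (J) := toEuclideanCLM_mul_inv (hV J)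
  have := isProbabilityMeasure_cond_dCube (d := d)
  simp only [avg_dCube_eq_integral_cond, matNorm, map_mul] at hAp
  refine volume_iUnion_maxBad_le_half (g₁ := fun x => K ^ p * matNorm (Wp x * (V I)⁻¹) ^ p)
    (g₂ := fun x => matNorm (Wm x * V I) ^ p') hl₁ hl₂
    (fun x => mul_nonneg (by positivity) (Real.rpow_nonneg (norm_nonneg _) _))
    (fun x => Real.rpow_nonneg (norm_nonneg _) _)
    ((integrableOn_matNorm_mul_rpow hp hWp (hi I) _).const_mul _)
    (integrableOn_matNorm_mul_rpow hp' hWm_posDef (hi' I) _) (fun J _ => ?_) (fun J _ => ?_) ?_ ?_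
  all_goals simp only [avg_dCube_eq_integral_cond, integral_const_mul, matNorm, map_mul]
  · exact (hred J).norm_mul_rpow_le hpp'.pos hK (memLp_Wp J) _
  · exact (hred J).norm_inverse_mul_rpow_le hpp' (memLp_Wp J) (memLp_Wm J) isPositive_Wp
      Wp_mul_Wm (V_mul_inv J) _
  · refine le_trans ?_ hKl₁
    gcongr
    exact ((hred I).integral_norm_mul_inverse_rpow_le hp (memLp_Wp I) (V_mul_inv I)).trans_eq
      (by rw [finrank_euclideanSpace_fin])
  · exact ((hred I).integral_norm_mul_rpow_le hpp' hK (memLp_Wp I) (memLp_Wm I) isPositive_Wp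
      isPositive_Wm (hAp I)).trans (by rwa [finrank_euclideanSpace_fin])

end MatrixWeights

theorem stmt9_general {d n : ℕ} {p p' K : ℝ} (hpp' : p.HolderConjugate p') (hK : 0 ≤ K) :
    ∃ c1 c2 : ℝ, 1 < c1 ∧ 1 < c2 ∧
      ∀ Wp Wm : (Fin d → ℝ) → Matrix (Fin n) (Fin n) ℂ,
        (∀ x, (Wp x).PosDef) → (∀ x, Wm x = (Wp x)⁻¹) →
      ∀ Cw : ℝ, 0 < Cw →
      (∀ I, avg (dCube d I)
        (fun x => (avg (dCube d I) fun t => matNorm (Wp x * Wm t) ^ p') ^ (p / p')) ≤ Cw) →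
      (∀ I e, IntegrableOn (fun x => vecNorm ((Wp x).mulVec e) ^ p) (dCube d I)) →
      (∀ I e, IntegrableOn (fun x => vecNorm ((Wm x).mulVec e) ^ p') (dCube d I)) →
      ∀ V : ℤ × (Fin d → ℤ) → Matrix (Fin n) (Fin n) ℂ, (∀ I, (V I).PosDef) →
        (∀ I (e : Fin n → ℂ),
          (avg (dCube d I) fun x => vecNorm ((Wp x).mulVec e) ^ p) ^ (1 / p)
            ≤ vecNorm ((V I).mulVec e) ∧
          vecNorm ((V I).mulVec e)
            ≤ K * (avg (dCube d I) fun x => vecNorm ((Wp x).mulVec e) ^ p) ^ (1 / p)) →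
      ∀ (I : ℤ × (Fin d → ℤ)) (j : ℕ),
        volume (⋃ J ∈ StopFam p p' c1 (c2 * Cw ^ (p' / p)) V j I, dCube d J)
          ≤ volume (dCube d I) / 2 ^ j := by
  have const_nonneg (r : ℝ) : 0 ≤ K ^ r * (n : ℝ) ^ r := by positivity
  refine ⟨4 * (K ^ p * n ^ p) + 2, 4 * (K ^ p' * n ^ p') + 2, by linarith [const_nonneg p],
    by linarith [const_nonneg p'], fun Wp Wm hWp hWm Cw hCw hAp hi hi' V hV hred I j => ?_⟩
  have Cw_rpow_pos : 0 < Cw ^ (p' / p) := by positivity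
  exact volume_iUnion_stopFam_le (volume_iUnion_maxBad_le_half_of_isReducing hpp' hK hWp hWm hAp
    hi hi' hV (fun J => isReducing_toEuclideanCLM (hV J) (hred J)) (by positivity) (by positivity)
    (by linarith) (by linarith)) I j

/-- Decaying stopping time: for a matrix `A_p` weight `W` (characteristic at most `Cw`, with
`Wp = W^{1/p}`, `Wm = W^{-1/p}`) and reducing operators `V_I`, there are `λ₁ = c₁ ≈ 1`
(depending only on `n`, `d`, `p`) and `λ₂ = c₂ Cw^{p'/p}` such that
`|⋃ J^j(I)| ≤ 2^{-j} |I|` for every dyadic cube `I` and every `j ≥ 0`. -/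
theorem stmt9 {d n : ℕ} (p p' : ℝ) (hp : 1 < p) (hpp' : 1 / p + 1 / p' = 1) :
    ∃ c1 c2 : ℝ, 1 < c1 ∧ 1 < c2 ∧
      ∀ (Wp Wm : (Fin d → ℝ) → Matrix (Fin n) (Fin n) ℂ),
        (∀ x, (Wp x).PosDef) → (∀ x, Wm x = (Wp x)⁻¹) →
      ∀ Cw : ℝ, 1 ≤ Cw →
      (∀ J : Set (Fin d → ℝ), IsCube J →
        avg J (fun x => (avg J fun t => matNorm (Wp x * Wm t) ^ p') ^ (p / p')) ≤ Cw) →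
      (∀ J : Set (Fin d → ℝ), IsCube J →
        ∀ e : Fin n → ℂ, IntegrableOn (fun x => vecNorm ((Wp x).mulVec e) ^ p) J volume) →
      (∀ J : Set (Fin d → ℝ), IsCube J →
        ∀ e : Fin n → ℂ, IntegrableOn (fun x => vecNorm ((Wm x).mulVec e) ^ p') J volume) →
      ∀ V : ℤ × (Fin d → ℤ) → Matrix (Fin n) (Fin n) ℂ,
        (∀ I, (V I).PosDef) →
        (∀ (I : ℤ × (Fin d → ℤ)) (e : Fin n → ℂ),
          (avg (dCube d I) fun x => vecNorm ((Wp x).mulVec e) ^ p) ^ (1 / p)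
            ≤ vecNorm ((V I).mulVec e) ∧
          vecNorm ((V I).mulVec e)
            ≤ Real.sqrt n *
              (avg (dCube d I) fun x => vecNorm ((Wp x).mulVec e) ^ p) ^ (1 / p)) →
      ∀ (I : ℤ × (Fin d → ℤ)) (j : ℕ),
        volume (⋃ J ∈ StopFam p p' c1 (c2 * Cw ^ (p' / p)) V j I, dCube d J)
          ≤ volume (dCube d I) / 2 ^ j := by
  have holder : p.HolderConjugate p' :=
    Real.holderConjugate_iff.2 ⟨hp, by rwa [one_div, one_div] at hpp'⟩
  obtain ⟨c1, c2, hc1, hc2, decay⟩ := stmt9_general (d := d) (n := n) holder (Real.sqrt_nonneg n)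
  exact ⟨c1, c2, hc1, hc2, fun Wp Wm hWp hWm Cw hCw hAp hi hi' =>
    decay Wp Wm hWp hWm Cw (one_pos.trans_le hCw) (fun I => hAp _ (isCube_dCube I))
      (fun I => hi _ (isCube_dCube I)) (fun I => hi' _ (isCube_dCube I))⟩
end
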